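/- For every a ∈ ℝ and every positive integer n that is not divisible by 8, there exists b ∈ ℝ\{0} such that the ℂ-vector space 𝒮(a,b) has dimension exactly n. -/

import Mathlib

open Complex MeasureTheory

noncomputable section

/-- Functions of four real variables `(t, x, y, z)` with complex values. -/
abbrev F4 : Type := ℝ → ℝ → ℝ → ℝ → ℂ

/-- Smoothness of a function of four real variables. -/
def Smooth4 (f : F4) : Prop :=
  ContDiff ℝ (⊤ : ℕ∞) (fun p : ℝ × ℝ × ℝ × ℝ => f p.1 p.2.1 p.2.2.1 p.2.2.2)

/-- The invariance properties identifying smooth functions on `ℝ⁴` with smooth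
functions on the Kodaira–Thurston manifold `KT⁴`. -/
def KTPeriodic (f : F4) : Prop :=
  ∀ t x y z : ℝ,
    f (t + 1) x y z = f t x y z ∧
    f t (x + 1) y (z + y) = f t x y z ∧
    f t x (y + 1) z = f t x y z ∧
    f t x y (z + 1) = f t x y z

/-- Partial derivative in `t`. -/
def pT (f : F4) (t x y z : ℝ) : ℂ := deriv (fun s => f s x y z) t
/-- Partial derivative in `x`. -/
def pX (f : F4) (t x y z : ℝ) : ℂ := deriv (fun s => f t s y z) x
/-- Partial derivative in `y`. -/
def pY (f : F4) (t x y z : ℝ) : ℂ := deriv (fun s => f t x s z) y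
/-- Partial derivative in `z`. -/
def pZ (f : F4) (t x y z : ℝ) : ℂ := deriv (fun s => f t x y s) z

/-- The vector field `V₁ = (1/2)(∂/∂t − i ∂/∂x)`. -/
def V₁ (f : F4) (t x y z : ℝ) : ℂ :=
  (1 / 2) * (pT f t x y z - Complex.I * pX f t x y z)

/-- The conjugate vector field `V̄₁ = (1/2)(∂/∂t + i ∂/∂x)`. -/
def V₁c (f : F4) (t x y z : ℝ) : ℂ :=
  (1 / 2) * (pT f t x y z + Complex.I * pX f t x y z)

/-- The vector field `V₂ = (1/2)(∂/∂y + x ∂/∂z − ((a−i)/b) ∂/∂z)`. -/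
def V₂ (a b : ℝ) (f : F4) (t x y z : ℝ) : ℂ :=
  (1 / 2) * (pY f t x y z + (x : ℂ) * pZ f t x y z -
    (((a : ℂ) - Complex.I) / (b : ℂ)) * pZ f t x y z)

/-- The conjugate vector field `V̄₂ = (1/2)(∂/∂y + x ∂/∂z − ((a+i)/b) ∂/∂z)`. -/
def V₂c (a b : ℝ) (f : F4) (t x y z : ℝ) : ℂ :=
  (1 / 2) * (pY f t x y z + (x : ℂ) * pZ f t x y z -
    (((a : ℂ) + Complex.I) / (b : ℂ)) * pZ f t x y z)

/-- The space `𝒮(a,b)` of pairs `(f,g)` of smooth KT-periodic functions satisfying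
`−V̄₂(f) + V̄₁(g) + (b/4)g = 0` and `V₁(f) + V₂(g) = 0`. -/
def Sol (a b : ℝ) : Set (F4 × F4) :=
  {fg | Smooth4 fg.1 ∧ Smooth4 fg.2 ∧ KTPeriodic fg.1 ∧ KTPeriodic fg.2 ∧
    (∀ t x y z : ℝ,
      -V₂c a b fg.1 t x y z + V₁c fg.2 t x y z + ((b : ℂ) / 4) * fg.2 t x y z = 0) ∧
    (∀ t x y z : ℝ, V₁ fg.1 t x y z + V₂ a b fg.2 t x y z = 0)}

/-- `S` is a `ℂ`-subspace of dimension exactly `n`: there are `n` linearly independent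
elements whose span is exactly `S`. -/
def HasDimOver {V : Type*} [AddCommGroup V] [Module ℂ V] (S : Set V) (n : ℕ) : Prop :=
  ∃ v : Fin n → V, LinearIndependent ℂ v ∧
    (Submodule.span ℂ (Set.range v) : Set V) = S

end

/-!
Pairing the two equations with `∂g/∂t` and `∂f/∂t` and integrating by parts shows that a solution
does not depend on `t`. On the `n`-th Fourier mode in `z`, with `n ≠ 0`, the sum and the difference
of `f` and `g` are exchanged by two formally adjoint first-order operators whose commutator is
`4πn`. So they are eigenvectors of a harmonic oscillator with a prescribed eigenvalue
`b²/16 - (2πn)²/b²`, and they vanish unless that eigenvalue lies in `4π|n|ℕ`. If there is no such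
resonance, a solution depends only on `(x, y)`, and its Fourier coefficients at `(k, m)` satisfy a
`2 × 2` system whose determinant vanishes exactly on the circle `4π(k² + m²) = bk`. The dimension is
therefore the number of lattice points on this circle.

For `b = 8πPᵉ/d` with `d ∣ 4` and a prime `P ≡ 1 mod 4`, the substitution `p ↦ dp - Pᵉ` turns these
points into the Gaussian integers of norm `P²ᵉ` congruent to `-Pᵉ` modulo `d`, and unique
factorization yields `4(2e + 1)/d` of them. Every `n` with `8 ∤ n` is of this form. A resonance is a
monic quadratic equation for `8π` with rational coefficients. If both `P = 5` and `P = 13` were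
resonant, the irrationality of `π` would identify the two equations and make their coefficients
integers, which crude bounds on `π` exclude.
-/

theorem hasDimOver_span {V ι : Type*} [AddCommGroup V] [Module ℂ V] [Finite ι] {v : ι → V}
    (hv : LinearIndependent ℂ v) :
    HasDimOver (Submodule.span ℂ (Set.range v) : Set V) (Nat.card ι) :=
  ⟨v ∘ (Finite.equivFin ι).symm, hv.comp _ (Finite.equivFin ι).symm.injective, by
    rw [(Finite.equivFin ι).symm.surjective.range_comp]⟩

/-! ### Ladder operators -/

section Ladder

variable {𝕜 E : Type*} [RCLike 𝕜] [NormedAddCommGroup E] [InnerProductSpace 𝕜 E]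

/-- `B` is a formal adjoint of `A`. No completeness is involved, so that differential operators on
smooth functions qualify. -/
def IsFormalAdjoint (A B : Module.End 𝕜 E) : Prop :=
  ∀ u v, inner 𝕜 (A u) v = inner 𝕜 u (B v)

/-- Skew-symmetric operators, `A† = -A`. -/
def IsSkew (A : Module.End 𝕜 E) : Prop :=
  ∀ u v, inner 𝕜 (A u) v = -inner 𝕜 u (A v)

theorem IsFormalAdjoint.symm {A B : Module.End 𝕜 E} (h : IsFormalAdjoint A B) :
    IsFormalAdjoint B A := fun u v => by
  rw [← inner_conj_symm, ← h, inner_conj_symm]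

theorem IsFormalAdjoint.eigenvalue_nonneg {A B : Module.End 𝕜 E} (h : IsFormalAdjoint A B)
    {p : E} (hp : p ≠ 0) {μ : ℝ} (hμ : B (A p) = (μ : 𝕜) • p) : 0 ≤ μ := by
  have norm_sq : ‖A p‖ ^ 2 = μ * ‖p‖ ^ 2 := by
    have := h p (A p)
    rw [hμ, inner_smul_right, inner_self_eq_norm_sq_to_K, inner_self_eq_norm_sq_to_K] at this
    exact_mod_cast this
  have : 0 < ‖p‖ ^ 2 := by positivity
  exact nonneg_of_mul_nonneg_left (norm_sq ▸ sq_nonneg ‖A p‖) this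

theorem IsSkew.re_inner_self_eq_zero {A : Module.End 𝕜 E} (hA : IsSkew A) (u : E) :
    RCLike.re (inner 𝕜 (A u) u) = 0 := by
  have : RCLike.re (inner 𝕜 (A u) u) = -RCLike.re (inner 𝕜 (A u) u) := by
    conv_lhs => rw [hA, map_neg, inner_re_symm]
  linarith

theorem IsSkew.inner_comm {A B : Module.End 𝕜 E} (hA : IsSkew A) (hB : IsSkew B)
    (hAB : Commute A B) (u v : E) : inner 𝕜 (A u) (B v) = inner 𝕜 (B u) (A v) := by
  have hBA : A (B v) = B (A v) := LinearMap.congr_fun hAB v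
  rw [hA, hBA, hB]

theorem IsSkew.im_inner_eq_zero {A B : Module.End 𝕜 E} (hA : IsSkew A) (hB : IsSkew B)
    (hAB : Commute A B) (u : E) : RCLike.im (inner 𝕜 (A u) (B u)) = 0 := by
  have : RCLike.im (inner 𝕜 (A u) (B u)) = -RCLike.im (inner 𝕜 (A u) (B u)) := by
    conv_lhs => rw [hA.inner_comm hB hAB, inner_im_symm]
  linarith

/-- The operator `A` lowers the eigenvalue of `B A` by `ω`, and such an eigenvalue is never
negative, so applying `A` repeatedly must reach `0`. -/
theorem IsFormalAdjoint.exists_eigenvalue_eq_nat_mul {A B : Module.End 𝕜 E}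
    (h : IsFormalAdjoint A B) (hcomm : Commute A ⁅A, B⁆) {ω : ℝ} (hω : 0 < ω) {p : E}
    (hp : p ≠ 0) (hpω : ⁅A, B⁆ p = (ω : 𝕜) • p) {μ : ℝ} (hμ : B (A p) = (μ : 𝕜) • p) :
    ∃ j : ℕ, μ = j * ω := by
  obtain ⟨k, hk⟩ := exists_nat_gt (μ / ω)
  rw [div_lt_iff₀ hω] at hk
  induction k generalizing μ p with
  | zero =>
    rw [Nat.cast_zero, zero_mul] at hk
    exact absurd (h.eigenvalue_nonneg hp hμ) hk.not_ge
  | succ k ih =>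
    by_cases hA : A p = 0
    · rw [hA, map_zero, eq_comm, smul_eq_zero_iff_left hp, RCLike.ofReal_eq_zero] at hμ
      exact ⟨0, by simpa using hμ⟩
    have hApω : ⁅A, B⁆ (A p) = (ω : 𝕜) • A p := by
      rw [← map_smul, ← hpω]
      exact (LinearMap.congr_fun hcomm p).symm
    have hAμ : B (A (A p)) = ((μ - ω : ℝ) : 𝕜) • A p := by
      have hsub : A (B (A p)) - B (A (A p)) = (ω : 𝕜) • A p := hApω
      rw [hμ, map_smul, sub_eq_iff_eq_add, ← sub_eq_iff_eq_add'] at hsub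
      rw [← hsub, ← sub_smul, RCLike.ofReal_sub]
    obtain ⟨j, hj⟩ := ih hA hApω hAμ (by push_cast at hk; linarith)
    exact ⟨j + 1, by push_cast; linarith⟩

theorem IsFormalAdjoint.eq_zero_of_pos {A B : Module.End 𝕜 E} (h : IsFormalAdjoint A B)
    (hcomm : Commute A ⁅A, B⁆) {ω : ℝ} (hω : 0 < ω) {p q : E} (hpω : ⁅A, B⁆ p = (ω : 𝕜) • p)
    {r s : ℝ} (hpq : A p = (r : 𝕜) • q) (hqp : B q = (s : 𝕜) • p)
    (hrs : ∀ j : ℕ, r * s ≠ j * ω) : p = 0 ∧ q = 0 := by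
  have hs : s ≠ 0 := by rintro rfl; simpa using hrs 0
  have hr : r ≠ 0 := by rintro rfl; simpa using hrs 0
  have hp : p = 0 := by
    by_contra hp
    obtain ⟨j, hj⟩ := h.exists_eigenvalue_eq_nat_mul hcomm hω hp hpω (μ := r * s)
      (by rw [hpq, map_smul, hqp, smul_smul, RCLike.ofReal_mul])
    exact hrs j hj
  refine ⟨hp, ?_⟩
  rwa [hp, map_zero, eq_comm, smul_eq_zero_iff_right (by exact_mod_cast hr)] at hpq

theorem IsFormalAdjoint.eq_zero_of_ne {A B : Module.End 𝕜 E} (h : IsFormalAdjoint A B)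
    (hA : Commute A ⁅A, B⁆) (hB : Commute B ⁅A, B⁆) {ω : ℝ} (hω : ω ≠ 0) {p q : E}
    (hpω : ⁅A, B⁆ p = (ω : 𝕜) • p) (hqω : ⁅A, B⁆ q = (ω : 𝕜) • q)
    {r s : ℝ} (hpq : A p = (r : 𝕜) • q) (hqp : B q = (s : 𝕜) • p)
    (hrs : ∀ j : ℕ, r * s ≠ j * |ω|) : p = 0 ∧ q = 0 := by
  rcases hω.lt_or_gt with hneg | hpos
  · have hBA : ⁅B, A⁆ = -⁅A, B⁆ := by simp only [Ring.lie_def, neg_sub]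
    refine (h.symm.eq_zero_of_pos (by rw [hBA]; exact hB.neg_right) (neg_pos.2 hneg) ?_ hqp hpq
      fun j => ?_).symm
    · rw [hBA, LinearMap.neg_apply, hqω, RCLike.ofReal_neg, neg_smul]
    · rw [mul_comm, ← abs_of_neg hneg]
      exact hrs j
  · exact h.eq_zero_of_pos hA hpos hpω hpq hqp fun j => abs_of_pos hpos ▸ hrs j

end Ladder

/-! ### The system in a representation of the Heisenberg Lie algebra -/

/-- A representation of the Lie algebra of `ℝ × H₃(ℝ)` by skew-symmetric operators. The operators
`T`, `X`, `Y`, `Z` play the role of `∂/∂t`, `∂/∂x`, `∂/∂y + x ∂/∂z` and `∂/∂z`. -/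
structure HeisenbergRep (V : Type*) [NormedAddCommGroup V] [InnerProductSpace ℂ V] where
  /-- the action of `∂/∂t` -/
  T : Module.End ℂ V
  /-- the action of `∂/∂x` -/
  X : Module.End ℂ V
  /-- the action of `∂/∂y + x ∂/∂z` -/
  Y : Module.End ℂ V
  /-- the action of `∂/∂z` -/
  Z : Module.End ℂ V
  isSkew_T : IsSkew T
  isSkew_X : IsSkew X
  isSkew_Y : IsSkew Y
  isSkew_Z : IsSkew Z
  commute_TX : Commute T X
  commute_TY : Commute T Y
  commute_TZ : Commute T Z
  commute_XZ : Commute X Z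
  commute_YZ : Commute Y Z
  lie_XY : ⁅X, Y⁆ = Z

namespace HeisenbergRep

variable {V : Type*} [NormedAddCommGroup V] [InnerProductSpace ℂ V] (R : HeisenbergRep V)

/-- The system defining `𝒮(a,b)`, multiplied by `2`, in an arbitrary representation. -/
def IsSolution (a b : ℝ) (f g : V) : Prop :=
  R.T g + I • R.X g + (b / 2 : ℂ) • g = R.Y f - ((a + I) / b : ℂ) • R.Z f ∧
  R.T f - I • R.X f = -R.Y g + ((a - I) / b : ℂ) • R.Z g

/-- The space of solutions of the system in a representation. -/
def solutions (a b : ℝ) : Submodule ℂ (V × V) where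
  carrier := {w | R.IsSolution a b w.1 w.2}
  add_mem' {v w} hv hw := by
    constructor <;> simp only [Prod.fst_add, Prod.snd_add, map_add]
    · linear_combination (norm := module) hv.1 + hw.1
    · linear_combination (norm := module) hv.2 + hw.2
  zero_mem' := by constructor <;> simp
  smul_mem' c w hw := by
    constructor <;> simp only [Prod.smul_fst, Prod.smul_snd, map_smul]
    · linear_combination (norm := module) c • hw.1
    · linear_combination (norm := module) c • hw.2

variable {R} {a b : ℝ} {f g : V}

/-- Pair the first equation with `T g`, the second with `T f`, and add the real parts: by
skew-symmetry everything cancels except `‖T f‖² + ‖T g‖²`. -/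
theorem IsSolution.T_eq_zero (h : R.IsSolution a b f g) : R.T f = 0 ∧ R.T g = 0 := by
  have pair_g := congrArg (fun w => (inner ℂ (R.T g) w).re) h.1
  have pair_f := congrArg (fun w => (inner ℂ (R.T f) w).re) h.2
  have norm_T (u : V) : (inner ℂ (R.T u) (R.T u)).re = ‖R.T u‖ ^ 2 :=
    inner_self_eq_norm_sq (𝕜 := ℂ) _
  have cross_X (u : V) : (I * inner ℂ (R.T u) (R.X u)).re = 0 := by
    rw [I_mul_re, neg_eq_zero]
    exact R.isSkew_T.im_inner_eq_zero R.isSkew_X R.commute_TX u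
  have cross_id : ((b / 2 : ℂ) * inner ℂ (R.T g) g).re = 0 := by
    rw [show (b / 2 : ℂ) = ((b / 2 : ℝ) : ℂ) by push_cast; rfl, re_ofReal_mul,
      show (inner ℂ (R.T g) g).re = 0 from R.isSkew_T.re_inner_self_eq_zero g, mul_zero]
  have cross_Y : (inner ℂ (R.T f) (R.Y g)).re = (inner ℂ (R.T g) (R.Y f)).re := by
    rw [R.isSkew_T.inner_comm R.isSkew_Y R.commute_TY, ← inner_conj_symm, conj_re]
  have cross_Z : ((a - I) / b * inner ℂ (R.T f) (R.Z g)).re =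
      ((a + I) / b * inner ℂ (R.T g) (R.Z f)).re := by
    rw [R.isSkew_T.inner_comm R.isSkew_Z R.commute_TZ, ← inner_conj_symm, ← conj_re,
      map_mul, conj_conj]
    simp
  simp only [inner_add_right, inner_sub_right, inner_smul_right, inner_neg_right, add_re, sub_re,
    neg_re, norm_T, cross_X, cross_id, cross_Y, cross_Z] at pair_f pair_g
  have hf : ‖R.T f‖ ^ 2 = 0 := by nlinarith [sq_nonneg ‖R.T f‖, sq_nonneg ‖R.T g‖]
  have hg : ‖R.T g‖ ^ 2 = 0 := by nlinarith [sq_nonneg ‖R.T f‖, sq_nonneg ‖R.T g‖]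
  exact ⟨by simpa using hf, by simpa using hg⟩

variable (R a b)

/-- The operator `iX + b/4 + Y - (a/b)Z`, which maps `f - g` to a multiple of `f + g` when
`(f, g)` is a solution in an eigenspace of `Z`. -/
noncomputable def lower : Module.End ℂ V := I • R.X + (b / 4 : ℂ) • 1 + R.Y - (a / b : ℂ) • R.Z

/-- The formal adjoint of `lower`, which maps `f + g` to a multiple of `f - g` when `(f, g)` is a
solution in an eigenspace of `Z`. -/
noncomputable def raise : Module.End ℂ V := I • R.X + (b / 4 : ℂ) • 1 - R.Y + (a / b : ℂ) • R.Z

theorem lower_apply (u : V) :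
    R.lower a b u = I • R.X u + (b / 4 : ℂ) • u + R.Y u - (a / b : ℂ) • R.Z u := rfl

theorem raise_apply (u : V) :
    R.raise a b u = I • R.X u + (b / 4 : ℂ) • u - R.Y u + (a / b : ℂ) • R.Z u := rfl

theorem isFormalAdjoint_lower_raise : IsFormalAdjoint (R.lower a b) (R.raise a b) := fun u v => by
  have conj_b : starRingEnd ℂ (b / 4 : ℂ) = b / 4 := by simp [map_ofNat]
  have conj_ab : starRingEnd ℂ (a / b : ℂ) = a / b := by simp
  simp only [lower_apply, raise_apply, inner_add_left, inner_sub_left, inner_smul_left,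
    inner_add_right, inner_sub_right, inner_smul_right, R.isSkew_X u, R.isSkew_Y u, R.isSkew_Z u,
    conj_b, conj_ab, conj_I]
  ring

theorem lie_lower_raise : ⁅R.lower a b, R.raise a b⁆ = (-2 * I) • R.Z := by
  have hXZ : R.X * R.Z = R.Z * R.X := R.commute_XZ
  have hYZ : R.Y * R.Z = R.Z * R.Y := R.commute_YZ
  have hXY : R.X * R.Y = R.Y * R.X + R.Z := by rw [← R.lie_XY, Ring.lie_def]; abel
  simp only [Ring.lie_def, lower, raise, mul_add, add_mul, mul_sub, sub_mul, smul_mul_assoc,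
    mul_smul_comm, hXZ, hYZ, hXY, one_mul, mul_one]
  module

theorem commute_lower_Z : Commute (R.lower a b) R.Z :=
  (((R.commute_XZ.smul_left I).add_left ((Commute.one_left _).smul_left _)).add_left
    R.commute_YZ).sub_left ((Commute.refl _).smul_left _)

theorem commute_raise_Z : Commute (R.raise a b) R.Z :=
  (((R.commute_XZ.smul_left I).add_left ((Commute.one_left _).smul_left _)).sub_left
    R.commute_YZ).add_left ((Commute.refl _).smul_left _)

variable {R a b}

theorem IsSolution.lower_sub_and_raise_add (h : R.IsSolution a b f g) {ν : ℝ}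
    (hf : R.Z f = (I * ν) • f) (hg : R.Z g = (I * ν) • g) :
    R.lower a b (f - g) = ((b / 4 - ν / b : ℝ) : ℂ) • (f + g) ∧
    R.raise a b (f + g) = ((b / 4 + ν / b : ℝ) : ℂ) • (f - g) := by
  have coeff_f : (a + I) / b * (I * ν) = a / b * (I * ν) - (ν / b : ℂ) := by
    linear_combination (ν / b : ℂ) * I_mul_I
  have coeff_g : (a - I) / b * (I * ν) = a / b * (I * ν) + (ν / b : ℂ) := by
    linear_combination -(ν / b : ℂ) * I_mul_I
  obtain ⟨hTf, hTg⟩ := h.T_eq_zero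
  obtain ⟨eq_f, eq_g⟩ := h
  rw [hTg, hf, smul_smul, coeff_f] at eq_f
  rw [hTf, hg, smul_smul, coeff_g] at eq_g
  constructor
  · rw [lower_apply, map_sub, map_sub, map_sub, hf, hg]
    push_cast
    linear_combination (norm := module) (-1 : ℂ) • eq_f - eq_g
  · rw [raise_apply, map_add, map_add, map_add, hf, hg]
    push_cast
    linear_combination (norm := module) eq_f - eq_g

/-- In an eigenspace of `Z`, the vectors `f ∓ g` are eigenvectors of `raise * lower` and of
`lower * raise` with eigenvalue `b²/16 - ν²/b²`, and the two operators commute up to the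
scalar `2ν`. -/
theorem IsSolution.eq_zero_of_Z_eigenvector (h : R.IsSolution a b f g) {ν : ℝ}
    (hν : ν ≠ 0) (hf : R.Z f = (I * ν) • f) (hg : R.Z g = (I * ν) • g)
    (hres : ∀ j : ℕ, b ^ 2 / 16 - ν ^ 2 / b ^ 2 ≠ 2 * |ν| * j) : f = 0 ∧ g = 0 := by
  have lie_apply {u : V} (hu : R.Z u = (I * ν) • u) :
      ⁅R.lower a b, R.raise a b⁆ u = ((2 * ν : ℝ) : ℂ) • u := by
    rw [lie_lower_raise, LinearMap.smul_apply, hu, smul_smul]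
    congr 1
    push_cast
    linear_combination (-2 * ν : ℂ) * I_mul_I
  obtain ⟨h_lower, h_raise⟩ := h.lower_sub_and_raise_add hf hg
  obtain ⟨h_sub, h_add⟩ := (R.isFormalAdjoint_lower_raise a b).eq_zero_of_ne
    (r := b / 4 - ν / b) (s := b / 4 + ν / b)
    (by rw [lie_lower_raise]; exact (R.commute_lower_Z a b).smul_right _)
    (by rw [lie_lower_raise]; exact (R.commute_raise_Z a b).smul_right _)
    (mul_ne_zero two_ne_zero hν) (lie_apply (by rw [map_sub, hf, hg, smul_sub]))
    (lie_apply (by rw [map_add, hf, hg, smul_add])) h_lower h_raise fun j => by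
      rw [abs_mul, abs_two, mul_comm (j : ℝ), (by ring :
        (b / 4 - ν / b) * (b / 4 + ν / b) = b ^ 2 / 16 - ν ^ 2 / b ^ 2)]
      exact hres j
  rw [sub_eq_zero] at h_sub
  rw [h_sub, ← two_smul ℂ, smul_eq_zero_iff_right two_ne_zero] at h_add
  exact ⟨h_sub.trans h_add, h_add⟩

end HeisenbergRep

/-! ### Avoiding resonances -/

/-- No eigenvalue `2πin` of `∂/∂z` with `n ≠ 0` meets the spectrum of the ladder operators, that is,
`b²/16 - ν²/b² ≠ 2|ν|j` for `ν = 2πn`. -/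
def NonResonant (b : ℝ) : Prop :=
  ∀ n : ℤ, n ≠ 0 → ∀ j : ℕ,
    b ^ 2 / 16 - (2 * Real.pi * n) ^ 2 / b ^ 2 ≠ 2 * |2 * Real.pi * n| * j

theorem NonResonant.ne_zero {b : ℝ} (h : NonResonant b) : b ≠ 0 := by
  rintro rfl
  simpa using h 1 one_ne_zero 0

theorem affine_eq_of_irrational {x : ℝ} (hx : Irrational x) {p q p' q' : ℚ}
    (h : (p : ℝ) * x + q = p' * x + q') : p = p' ∧ q = q' := by
  have hp : p = p' := by
    by_contra hne
    have hne' : (p : ℝ) - p' ≠ 0 := sub_ne_zero.2 (by exact_mod_cast hne)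
    refine hx ⟨(q' - q) / (p - p'), ?_⟩
    push_cast
    rw [div_eq_iff hne']
    linear_combination -h
  subst hp
  exact ⟨rfl, by exact_mod_cast add_left_cancel h⟩

theorem irrational_eight_mul_pi : Irrational (8 * Real.pi) := by
  exact_mod_cast irrational_pi.natCast_mul (by norm_num : (8 : ℕ) ≠ 0)

/-- For `j > 0` the right-hand side is too large when `jm ≥ 4` and too small when `jm ≤ 3`, as
`3.14 < π < 3.15` shows. -/
theorem sq_eight_mul_pi_ne {m : ℕ} (hm : 0 < m) (j : ℕ) :
    (8 * Real.pi) ^ 2 ≠ 8 * j * m * (8 * Real.pi) + (m : ℝ) ^ 2 := by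
  intro h
  have pi_gt := Real.pi_gt_d2
  have pi_lt := Real.pi_lt_d2
  have hm1 : (1 : ℝ) ≤ m := by exact_mod_cast hm
  rcases Nat.eq_zero_or_pos j with rfl | hj
  · refine irrational_eight_mul_pi ⟨m, ?_⟩
    rw [Nat.cast_zero, mul_zero, zero_mul, zero_mul, zero_add,
      sq_eq_sq₀ (by positivity) (by positivity)] at h
    exact_mod_cast h.symm
  have hj1 : (1 : ℝ) ≤ j := by exact_mod_cast hj
  rcases le_or_gt 4 (j * m) with large | small
  · have : (4 : ℝ) ≤ j * m := by exact_mod_cast large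
    nlinarith
  · have : (j : ℝ) * m ≤ 3 := by exact_mod_cast Nat.le_of_lt_succ small
    have : (m : ℝ) ≤ 3 := by nlinarith
    nlinarith

theorem exists_quadratic_of_not_nonResonant {A d : ℕ} (hA : 0 < A) (hd : 0 < d)
    (h : ¬ NonResonant (8 * Real.pi * A / d)) :
    ∃ m j : ℕ, 0 < m ∧
      (8 * Real.pi) ^ 2 = 8 * j * (m / A ^ 2) * (8 * Real.pi) + (m / A ^ 2 : ℝ) ^ 2 := by
  simp only [NonResonant, not_forall, not_not] at h
  obtain ⟨n, hn, j, h⟩ := h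
  refine ⟨d ^ 2 * n.natAbs, j, by positivity, ?_⟩
  have cast_natAbs : ((n.natAbs : ℕ) : ℝ) = |(n : ℝ)| := by rw [Nat.cast_natAbs, Int.cast_abs]
  rw [abs_mul, abs_of_pos Real.two_pi_pos] at h
  push_cast
  rw [cast_natAbs]
  field_simp at h ⊢
  linear_combination h / 64 - (d : ℝ) ^ 4 * sq_abs (n : ℝ)

/-- If both were resonant, `8π` would be a root of two quadratics whose rational constant terms are
`(m/A²)²` and `(m'/B²)²`. Irrationality of `π` makes them agree, so `m/A²` is an integer. -/
theorem nonResonant_or_nonResonant {A B d : ℕ} (hA : 0 < A) (hB : 0 < B) (hd : 0 < d)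
    (hAB : A.Coprime B) :
    NonResonant (8 * Real.pi * A / d) ∨ NonResonant (8 * Real.pi * B / d) := by
  by_contra! ⟨resA, resB⟩
  obtain ⟨m, j, hm, quadA⟩ := exists_quadratic_of_not_nonResonant hA hd resA
  obtain ⟨m', j', -, quadB⟩ := exists_quadratic_of_not_nonResonant hB hd resB
  have const_eq : ((m : ℚ) / A ^ 2) ^ 2 = (m' / B ^ 2) ^ 2 :=
    (affine_eq_of_irrational irrational_eight_mul_pi (p := 8 * j * (m / A ^ 2))
      (p' := 8 * j' * (m' / B ^ 2)) (by push_cast; exact quadA.symm.trans quadB)).2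
  have cross_mul : m * B ^ 2 = m' * A ^ 2 := by
    rw [sq_eq_sq₀ (by positivity) (by positivity),
      div_eq_div_iff (by positivity) (by positivity)] at const_eq
    exact_mod_cast const_eq
  obtain ⟨k, rfl⟩ : A ^ 2 ∣ m := (hAB.pow 2 2).dvd_of_dvd_mul_right
    ⟨m', by rw [cross_mul, mul_comm]⟩
  refine sq_eight_mul_pi_ne (Nat.pos_of_mul_pos_left hm) j ?_
  have hA' : (A : ℝ) ≠ 0 := by positivity
  rw [quadA, Nat.cast_mul, Nat.cast_pow, mul_div_cancel_left₀ _ (pow_ne_zero 2 hA')]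

/-! ### Lattice points on circles -/

namespace LatticeCircle

open Finset

theorem isUnit_gaussianInt_iff {u : GaussianInt} :
    IsUnit u ↔ u ∈ ({1, -1, ⟨0, 1⟩, ⟨0, -1⟩} : Finset GaussianInt) := by
  constructor
  · intro hu
    obtain ⟨x, y⟩ := u
    have norm_eq : x * x + y * y = 1 := by
      have := (Zsqrtd.norm_eq_one_iff' (by norm_num) _).2 hu
      rw [Zsqrtd.norm_def] at this
      linarith
    obtain ⟨hx, hx'⟩ : -1 ≤ x ∧ x ≤ 1 := by constructor <;> nlinarith [mul_self_nonneg y]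
    obtain ⟨hy, hy'⟩ : -1 ≤ y ∧ y ≤ 1 := by constructor <;> nlinarith [mul_self_nonneg x]
    interval_cases x <;> interval_cases y <;> first | decide | omega
  · rw [← Zsqrtd.norm_eq_one_iff' (by norm_num)]
    revert u
    decide

theorem prime_of_norm_eq_prime {P : ℕ} (hP : P.Prime) {w : GaussianInt} (hw : w.norm = P) :
    Prime w := by
  refine Irreducible.prime ⟨fun h => ?_, fun x y hxy => ?_⟩
  · rw [← Zsqrtd.norm_eq_one_iff, hw, Int.natAbs_natCast] at h
    exact hP.one_lt.ne' h
  · rw [hxy, Zsqrtd.norm_mul] at hw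
    have mul_eq : x.norm.natAbs * y.norm.natAbs = P := by
      rw [← Int.natAbs_mul, hw, Int.natAbs_natCast]
    rw [← Zsqrtd.norm_eq_one_iff, ← Zsqrtd.norm_eq_one_iff]
    exact (Nat.prime_mul_iff.mp (mul_eq ▸ hP)).symm.imp And.right And.right

theorem norm_pow {d : ℤ} (z : ℤ√d) (k : ℕ) : (z ^ k).norm = z.norm ^ k :=
  map_pow Zsqrtd.normMonoidHom z k

/-- `w` divides `z z̄`, hence `z` or `z̄`, and one factor can be split off. -/
theorem exists_eq_unit_mul_pow_mul_pow {P : ℕ} (hP : P.Prime) {w : GaussianInt} (hw : w.norm = P)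
    (N : ℕ) {z : GaussianInt} (hz : z.norm = (P : ℤ) ^ N) :
    ∃ u, IsUnit u ∧ ∃ i j, i + j = N ∧ u * w ^ i * star w ^ j = z := by
  have hP0 : (P : ℤ) ≠ 0 := by exact_mod_cast hP.ne_zero
  induction N generalizing z with
  | zero =>
    exact ⟨z, (Zsqrtd.norm_eq_one_iff' (by norm_num) z).1 (by simpa using hz), 0, 0, by simp⟩
  | succ N ih =>
    have hdvd : w ∣ z * star z := by
      rw [← Zsqrtd.norm_eq_mul_conj, hz, ← hw, pow_succ', Int.cast_mul, Zsqrtd.norm_eq_mul_conj w,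
        mul_assoc]
      exact dvd_mul_right _ _
    rcases (prime_of_norm_eq_prime hP hw).dvd_or_dvd hdvd with ⟨v, rfl⟩ | hstar
    · rw [Zsqrtd.norm_mul, hw, pow_succ'] at hz
      obtain ⟨u, hu, i, j, hij, rfl⟩ := ih (mul_left_cancel₀ hP0 hz)
      exact ⟨u, hu, i + 1, j, by omega, by ring⟩
    · obtain ⟨v, hv⟩ := hstar
      obtain rfl : z = star w * star v := by rw [← star_mul', ← hv, star_star]
      rw [Zsqrtd.norm_mul, Zsqrtd.norm_conj, hw, pow_succ'] at hz
      obtain ⟨u, hu, i, j, hij, hv⟩ := ih (mul_left_cancel₀ hP0 hz)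
      exact ⟨u, hu, i, j + 1, by omega, by rw [← hv]; ring⟩

theorem le_of_pow_mul_eq_pow_mul {R : Type*} [CommMonoidWithZero R] [IsCancelMulZero R] {p a b : R}
    (hp : Prime p) (hb : ¬ p ∣ b) {i j : ℕ} (h : p ^ i * a = p ^ j * b) : i ≤ j :=
  (pow_dvd_pow_iff hp.ne_zero hp.not_isUnit).1
    (hp.pow_dvd_of_dvd_mul_right i hb (h ▸ dvd_mul_right _ _))

theorem eq_of_unit_mul_pow_mul_pow_eq {R : Type*} [CommMonoidWithZero R] [IsCancelMulZero R]
    {p q : R} (hp : Prime p) (hq : q ≠ 0) (hpq : ¬ p ∣ q) {u u' : R} (hu : IsUnit u)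
    (hu' : IsUnit u') {i j i' j' : ℕ} (hij : i + j = i' + j')
    (h : u * p ^ i * q ^ j = u' * p ^ i' * q ^ j') : u = u' ∧ i = i' ∧ j = j' := by
  have not_dvd {v : R} (hv : IsUnit v) (k : ℕ) : ¬ p ∣ v * q ^ k := fun hdvd =>
    hpq <| hp.dvd_of_dvd_pow <| (hp.dvd_or_dvd hdvd).resolve_left fun hpv =>
      hp.not_isUnit (isUnit_of_dvd_unit hpv hv)
  have h' : p ^ i * (u * q ^ j) = p ^ i' * (u' * q ^ j') := by
    rw [mul_left_comm, ← mul_assoc, h, mul_assoc, mul_left_comm]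
  obtain rfl : i = i' := le_antisymm (le_of_pow_mul_eq_pow_mul hp (not_dvd hu' j') h')
    (le_of_pow_mul_eq_pow_mul hp (not_dvd hu j) h'.symm)
  obtain rfl : j = j' := by omega
  have hu_eq := mul_right_cancel₀ (pow_ne_zero j hq) h
  exact ⟨mul_right_cancel₀ (pow_ne_zero i hp.ne_zero) hu_eq, rfl, rfl⟩

/-- The parity condition makes `u w^i w̄^j ≡ u` modulo `4` for even `i + j`. -/
theorem exists_norm_eq_prime {P : ℕ} (hP : P.Prime) (hP4 : P % 4 = 1) :
    ∃ w : GaussianInt, w.norm = P ∧ Odd w.re ∧ Even w.im := by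
  have : Fact P.Prime := ⟨hP⟩
  obtain ⟨x, y, hxy⟩ := Nat.Prime.sq_add_sq (p := P) (by omega)
  have parity : (Odd x ∧ Even y) ∨ (Odd y ∧ Even x) := by
    have hodd : Odd (x ^ 2 + y ^ 2) := by rw [hxy, Nat.odd_iff]; omega
    rw [Nat.odd_add, Nat.odd_pow_iff two_ne_zero, Nat.even_pow' two_ne_zero] at hodd
    rcases Nat.even_or_odd x with hx | hx
    · exact Or.inr ⟨by rw [← Nat.not_even_iff_odd, ← hodd, Nat.not_odd_iff_even]; exact hx, hx⟩
    · exact Or.inl ⟨hx, hodd.1 hx⟩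
  have hxyZ : (x : ℤ) ^ 2 + (y : ℤ) ^ 2 = P := by exact_mod_cast hxy
  rcases parity with ⟨hodd, heven⟩ | ⟨hodd, heven⟩
  · exact ⟨⟨x, y⟩, by rw [Zsqrtd.norm_def]; linear_combination hxyZ, by simpa using hodd,
      by simpa using heven⟩
  · exact ⟨⟨y, x⟩, by rw [Zsqrtd.norm_def]; linear_combination hxyZ, by simpa using hodd,
      by simpa using heven⟩

theorem not_dvd_star {P : ℕ} (hP : P.Prime) {w : GaussianInt} (hw : w.norm = P)
    (hre : Odd w.re) (him : Even w.im) : ¬ w ∣ star w := by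
  intro hdvd
  have norm_eq : w.re ^ 2 + w.im ^ 2 = P := by rw [← hw, Zsqrtd.norm_def]; ring
  have hP' : Prime (P : ℤ) := Nat.prime_iff_prime_int.1 hP
  have dvd_trace : (P : ℤ) ∣ (2 * w.re) ^ 2 := by
    have : w ∣ ((2 * w.re : ℤ) : GaussianInt) := by
      convert dvd_add_self_left.2 hdvd using 1
      ext <;> simp [two_mul]
    have norm_dvd : w.norm ∣ ((2 * w.re : ℤ) : GaussianInt).norm :=
      map_dvd Zsqrtd.normMonoidHom this
    rwa [hw, Zsqrtd.norm_intCast, ← sq] at norm_dvd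
  have dvd_re : (P : ℤ) ∣ w.re := by
    refine (hP'.dvd_or_dvd (hP'.dvd_of_dvd_pow dvd_trace)).resolve_left fun h2 => ?_
    have hodd : Odd (P : ℤ) := by
      rw [← norm_eq]; exact hre.pow.add_even (him.pow_of_ne_zero two_ne_zero)
    obtain ⟨k, hk⟩ := hodd
    have := Int.le_of_dvd two_pos h2
    have := hP.two_le
    omega
  have hre0 : 0 < |w.re| := abs_pos.2 (by rintro h; simp [h] at hre)
  have := Int.le_of_dvd hre0 ((dvd_abs _ _).2 dvd_re)
  nlinarith [hP.two_le, sq_nonneg w.im, sq_abs w.re]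

theorem four_dvd_unit_mul_pow_mul_pow_sub {w : GaussianInt} (hre : Odd w.re) (him : Even w.im)
    (u : GaussianInt) {i j e : ℕ} (hij : i + j = 2 * e) :
    ((4 : ℤ) : GaussianInt) ∣ u * w ^ i * star w ^ j - u := by
  obtain ⟨x, hx⟩ := hre
  obtain ⟨y, hy⟩ := him.two_dvd
  have star_sub : ((4 : ℤ) : GaussianInt) ∣ star w - w := by
    rw [Zsqrtd.intCast_dvd]
    simp only [Zsqrtd.re_sub, Zsqrtd.re_star, Zsqrtd.im_sub, Zsqrtd.im_star, hx, hy]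
    omega
  have sq_sub : ((4 : ℤ) : GaussianInt) ∣ w ^ 2 - 1 := by
    rw [Zsqrtd.intCast_dvd, sq]
    simp only [Zsqrtd.re_sub, Zsqrtd.re_mul, Zsqrtd.re_one, Zsqrtd.im_sub, Zsqrtd.im_mul,
      Zsqrtd.im_one, hx, hy]
    exact ⟨⟨x ^ 2 + x - y ^ 2, by ring⟩, ⟨2 * x * y + y, by ring⟩⟩
  have key : u * w ^ i * star w ^ j - u =
      u * w ^ i * (star w ^ j - w ^ j) + u * ((w ^ 2) ^ e - 1 ^ e) := by
    rw [← pow_mul, ← hij]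
    ring
  rw [key]
  exact dvd_add ((star_sub.trans (sub_dvd_pow_sub_pow _ _ j)).mul_left _)
    ((sq_sub.trans (sub_dvd_pow_sub_pow _ _ e)).mul_left _)

/-- The Gaussian integers `p` on the circle of radius `C / d` through the origin with centre
`C / d`, cleared of denominators. -/
def circle (d : ℕ) (C : ℤ) : Set GaussianInt := {p | d * p.norm = 2 * C * p.re}

/-- The map `p ↦ dp - C` moves the centre to the origin. -/
theorem image_circle {d : ℕ} (hd : d ≠ 0) (C : ℤ) :
    (fun p : GaussianInt => ((d : ℤ) : GaussianInt) * p - (C : GaussianInt)) '' circle d C =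
      {z | z.norm = C ^ 2 ∧ ((d : ℤ) : GaussianInt) ∣ z + (C : GaussianInt)} := by
  have norm_sub (p : GaussianInt) : (((d : ℤ) : GaussianInt) * p - (C : GaussianInt)).norm = C ^ 2 ↔
      p ∈ circle d C := by
    have hd' : (d : ℤ) ≠ 0 := by exact_mod_cast hd
    have : (((d : ℤ) : GaussianInt) * p - (C : GaussianInt)).norm - C ^ 2 =
        d * (d * p.norm - 2 * C * p.re) := by
      simp only [Zsqrtd.norm_def, Zsqrtd.re_sub, Zsqrtd.re_mul, Zsqrtd.im_sub, Zsqrtd.im_mul,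
        Zsqrtd.re_intCast, Zsqrtd.im_intCast]
      ring
    rw [← sub_eq_zero, this, mul_eq_zero_iff_left hd', sub_eq_zero]
    rfl
  ext z
  constructor
  · rintro ⟨p, hp, rfl⟩
    exact ⟨(norm_sub p).2 hp, by simp⟩
  · rintro ⟨hz, p, hp⟩
    rw [← eq_sub_iff_add_eq] at hp
    exact ⟨p, (norm_sub p).1 (hp ▸ hz), hp.symm⟩

/-- The Gaussian units `u` with `d ∣ u + 1`. -/
def unitsModNegOne (d : ℕ) : Finset GaussianInt :=
  {u ∈ {1, -1, ⟨0, 1⟩, ⟨0, -1⟩} | (d : ℤ) ∣ u.re + 1 ∧ (d : ℤ) ∣ u.im}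

theorem mem_unitsModNegOne {d : ℕ} {u : GaussianInt} :
    u ∈ unitsModNegOne d ↔ IsUnit u ∧ ((d : ℤ) : GaussianInt) ∣ u + 1 := by
  rw [unitsModNegOne, mem_filter, ← isUnit_gaussianInt_iff, Zsqrtd.intCast_dvd, Zsqrtd.re_add,
    Zsqrtd.im_add, Zsqrtd.re_one, Zsqrtd.im_one, add_zero]

theorem mul_card_unitsModNegOne {d : ℕ} (hd : d ∣ 4) : d * #(unitsModNegOne d) = 4 := by
  obtain rfl | rfl | rfl : d = 1 ∨ d = 2 ∨ d = 4 := by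
    have := Nat.le_of_dvd four_pos hd
    interval_cases d <;> omega
  all_goals decide

theorem dvd_unit_mul_pow_mul_pow_add_iff {C : ℤ} (hC : 4 ∣ C - 1) {d : ℕ} (hd : d ∣ 4)
    {w : GaussianInt} (hre : Odd w.re) (him : Even w.im) (u : GaussianInt) {i j e : ℕ}
    (hij : i + j = 2 * e) :
    ((d : ℤ) : GaussianInt) ∣ u * w ^ i * star w ^ j + (C : GaussianInt) ↔
      ((d : ℤ) : GaussianInt) ∣ u + 1 := by
  have hd4 : ((d : ℤ) : GaussianInt) ∣ ((4 : ℤ) : GaussianInt) :=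
    (Zsqrtd.intCast_dvd_intCast _ _).2 (by exact_mod_cast hd)
  have hC' : ((4 : ℤ) : GaussianInt) ∣ (C : GaussianInt) - 1 := by
    simpa using (Zsqrtd.intCast_dvd_intCast (d := -1) _ _).2 hC
  refine dvd_iff_dvd_of_dvd_sub (hd4.trans ?_)
  rw [add_sub_add_comm]
  exact dvd_add (four_dvd_unit_mul_pow_mul_pow_sub hre him u hij) hC'

theorem setOf_norm_eq_sq_and_dvd {P : ℕ} (hP : P.Prime) {w : GaussianInt} (hw : w.norm = P)
    (hre : Odd w.re) (him : Even w.im) {e : ℕ} {C : ℤ} (hCP : C ^ 2 = (P : ℤ) ^ (2 * e))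
    (hC : 4 ∣ C - 1) {d : ℕ} (hd : d ∣ 4) :
    {z : GaussianInt | z.norm = C ^ 2 ∧ ((d : ℤ) : GaussianInt) ∣ z + (C : GaussianInt)} =
      (fun q : GaussianInt × ℕ × ℕ => q.1 * w ^ q.2.1 * star w ^ q.2.2) ''
        (unitsModNegOne d ×ˢ antidiagonal (2 * e) : Finset (GaussianInt × ℕ × ℕ)) := by
  ext z
  simp only [Set.mem_ofPred_eq, Set.mem_image, mem_coe, mem_product, mem_unitsModNegOne,
    HasAntidiagonal.mem_antidiagonal, Prod.exists, hCP]
  constructor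
  · rintro ⟨hz, hdvd⟩
    obtain ⟨u, hu, i, j, hij, rfl⟩ := exists_eq_unit_mul_pow_mul_pow hP hw _ hz
    rw [dvd_unit_mul_pow_mul_pow_add_iff hC hd hre him u hij] at hdvd
    exact ⟨u, i, j, ⟨⟨hu, hdvd⟩, hij⟩, rfl⟩
  · rintro ⟨u, i, j, ⟨⟨hu, hdvd⟩, hij⟩, rfl⟩
    refine ⟨?_, (dvd_unit_mul_pow_mul_pow_add_iff hC hd hre him u hij).2 hdvd⟩
    rw [Zsqrtd.norm_mul, Zsqrtd.norm_mul, norm_pow, norm_pow, Zsqrtd.norm_conj, hw,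
      (Zsqrtd.norm_eq_one_iff' (by norm_num) u).2 hu, one_mul, ← pow_add, hij]

theorem mul_ncard_circle {P : ℕ} (hP : P.Prime) (hP4 : P % 4 = 1) {d : ℕ} (hd : d ∣ 4) (e : ℕ) :
    d * (circle d ((P : ℤ) ^ e)).ncard = 4 * (2 * e + 1) := by
  obtain ⟨w, hw, hre, him⟩ := exists_norm_eq_prime hP hP4
  have hprime := prime_of_norm_eq_prime hP hw
  have hd0 : d ≠ 0 := by rintro rfl; simp at hd
  have hC : (4 : ℤ) ∣ (P : ℤ) ^ e - 1 := by
    simpa using (show (4 : ℤ) ∣ P - 1 by omega).trans (sub_dvd_pow_sub_pow (P : ℤ) 1 e)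
  have shift_injective : Function.Injective fun p : GaussianInt =>
      ((d : ℤ) : GaussianInt) * p - (((P : ℤ) ^ e : ℤ) : GaussianInt) := fun p q hpq =>
    mul_left_cancel₀ (by exact_mod_cast hd0) (sub_left_injective hpq)
  have factor_injOn : Set.InjOn (fun q : GaussianInt × ℕ × ℕ => q.1 * w ^ q.2.1 * star w ^ q.2.2)
      (unitsModNegOne d ×ˢ antidiagonal (2 * e) : Finset (GaussianInt × ℕ × ℕ)) := by
    rintro ⟨u, i, j⟩ h ⟨u', i', j'⟩ h' heq
    simp only [mem_coe, mem_product, mem_unitsModNegOne, HasAntidiagonal.mem_antidiagonal] at h h'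
    obtain ⟨rfl, rfl, rfl⟩ := eq_of_unit_mul_pow_mul_pow_eq hprime (star_ne_zero.2 hprime.ne_zero)
      (not_dvd_star hP hw hre him) h.1.1 h'.1.1 (h.2.trans h'.2.symm) heq
    rfl
  rw [← Set.ncard_image_of_injective _ shift_injective, image_circle hd0,
    setOf_norm_eq_sq_and_dvd hP hw hre him (by rw [← pow_mul, mul_comm e]) hC hd,
    factor_injOn.ncard_image, Set.ncard_coe_finset, card_product,
    Nat.card_antidiagonal, ← mul_assoc, mul_card_unitsModNegOne hd]

end LatticeCircle

/-! ### Parametric integrals -/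

section ParametricIntegral

universe u

variable {E G : Type u} [NormedAddCommGroup E] [NormedSpace ℝ E] [ProperSpace E]
  [NormedAddCommGroup G] [NormedSpace ℝ G] {a b : ℝ}

theorem hasFDerivAt_parametric_intervalIntegral {U : E × ℝ → G} (hU : ContDiff ℝ 1 U) (p : E) :
    HasFDerivAt (fun p => ∫ r in a..b, U (p, r))
      (∫ r in a..b, (fderiv ℝ U (p, r)).comp (ContinuousLinearMap.inl ℝ E ℝ)) p := by
  have cont_deriv :
      Continuous fun q : E × ℝ => (fderiv ℝ U q).comp (ContinuousLinearMap.inl ℝ E ℝ) :=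
    (hU.continuous_fderiv one_ne_zero).clm_comp continuous_const
  have line_cont (q : E) : Continuous fun r : ℝ => (q, r) := by fun_prop
  obtain ⟨C, hC⟩ := ((isCompact_closedBall p 1).prod
    (isCompact_uIcc (a := a) (b := b))).exists_bound_of_continuousOn cont_deriv.continuousOn
  refine intervalIntegral.hasFDerivAt_integral_of_dominated_of_fderiv_le (bound := fun _ => C)
    (F' := fun p r => (fderiv ℝ U (p, r)).comp (ContinuousLinearMap.inl ℝ E ℝ))
    (Metric.closedBall_mem_nhds p one_pos)
    (.of_forall fun q => (hU.continuous.comp (line_cont q)).aestronglyMeasurable)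
    ((hU.continuous.comp (line_cont p)).intervalIntegrable _ _)
    (cont_deriv.comp (line_cont p)).aestronglyMeasurable
    (.of_forall fun r hr q hq => hC (q, r) ⟨hq, Set.uIoc_subset_uIcc hr⟩)
    intervalIntegrable_const (.of_forall fun r _ q _ => ?_)
  exact (hU.differentiable one_ne_zero (q, r)).hasFDerivAt.comp q (hasFDerivAt_prodMk_left q r)

theorem fderiv_parametric_intervalIntegral_apply {U : E × ℝ → G} (hU : ContDiff ℝ 1 U) (p v : E) :
    fderiv ℝ (fun p => ∫ r in a..b, U (p, r)) p v =
      ∫ r in a..b, fderiv ℝ (fun q => U (q, r)) p v := by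
  have partial_eq (r : ℝ) : fderiv ℝ (fun q => U (q, r)) p =
      (fderiv ℝ U (p, r)).comp (ContinuousLinearMap.inl ℝ E ℝ) :=
    ((hU.differentiable one_ne_zero (p, r)).hasFDerivAt.comp p
      (hasFDerivAt_prodMk_left p r)).fderiv
  rw [(hasFDerivAt_parametric_intervalIntegral hU p).fderiv,
    ContinuousLinearMap.intervalIntegral_apply]
  · simp only [partial_eq]
  · exact (((hU.continuous_fderiv one_ne_zero).clm_comp continuous_const).comp
      (by fun_prop : Continuous fun r : ℝ => (p, r))).intervalIntegrable _ _

theorem contDiff_natCast_parametric_intervalIntegral (n : ℕ) {U : E × ℝ → G} (hU : ContDiff ℝ n U) :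
    ContDiff ℝ n fun p => ∫ r in a..b, U (p, r) := by
  induction n generalizing G with
  | zero =>
    exact contDiff_zero.2 (intervalIntegral.continuous_parametric_intervalIntegral_of_continuous'
      (f := fun p r => U (p, r)) hU.continuous a b)
  | succ n ih =>
    have hU_one : ContDiff ℝ 1 U := hU.of_le (by norm_cast; omega)
    have hderiv (p : E) := hasFDerivAt_parametric_intervalIntegral (a := a) (b := b) hU_one p
    push_cast
    rw [contDiff_succ_iff_fderiv]
    refine ⟨fun p => (hderiv p).differentiableAt, by simp, ?_⟩
    rw [funext fun p => (hderiv p).fderiv]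
    exact ih (U := fun q => (fderiv ℝ U q).comp (ContinuousLinearMap.inl ℝ E ℝ))
      ((hU.fderiv_right (by push_cast; rfl)).clm_comp contDiff_const)

theorem contDiff_infty_parametric_intervalIntegral {U : E × ℝ → G}
    (hU : ContDiff ℝ (⊤ : ℕ∞) U) : ContDiff ℝ (⊤ : ℕ∞) fun p => ∫ r in a..b, U (p, r) :=
  contDiff_infty.2 fun n => contDiff_natCast_parametric_intervalIntegral n (contDiff_infty.1 hU n)

end ParametricIntegral

section Fubini

variable {E F G : Type*} [TopologicalSpace E] [TopologicalSpace F] [T2Space E] [T2Space F]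
  [MeasurableSpace E] [MeasurableSpace F] [OpensMeasurableSpace (E × F)] [NormedAddCommGroup G]
  {μ : Measure E} {ν : Measure F} [IsFiniteMeasureOnCompacts (μ.prod ν)]
  {K : Set E} {L : Set F} {φ : E × F → G}

theorem integrable_prod_restrict (hφ : Continuous φ) (hK : IsCompact K) (hL : IsCompact L)
    [SFinite μ] [SFinite ν] : Integrable φ ((μ.restrict K).prod (ν.restrict L)) := by
  rw [Measure.prod_restrict]
  exact hφ.continuousOn.integrableOn_compact' (hK.prod hL) (hK.prod hL).isClosed.measurableSet

variable [NormedSpace ℝ G] [SFinite μ] [SFinite ν]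

theorem setIntegral_prod_of_isCompact (hφ : Continuous φ) (hK : IsCompact K) (hL : IsCompact L) :
    ∫ p in K ×ˢ L, φ p ∂μ.prod ν = ∫ x in K, ∫ y in L, φ (x, y) ∂ν ∂μ := by
  rw [← Measure.prod_restrict, integral_prod _ (integrable_prod_restrict hφ hK hL)]

theorem setIntegral_prod_symm_of_isCompact (hφ : Continuous φ) (hK : IsCompact K)
    (hL : IsCompact L) : ∫ p in K ×ˢ L, φ p ∂μ.prod ν = ∫ y in L, ∫ x in K, φ (x, y) ∂μ ∂ν := by
  rw [← Measure.prod_restrict, integral_prod_symm _ (integrable_prod_restrict hφ hK hL)]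

end Fubini

/-! ### Fourier analysis of periodic functions -/

/-- The character `r ↦ e^{2πinr}` of `ℝ / ℤ`, as a function on `ℝ`. -/
noncomputable def expMode (n : ℤ) (r : ℝ) : ℂ := fourier n (r : UnitAddCircle)

theorem expMode_eq_exp (n : ℤ) (r : ℝ) : expMode n r = exp (2 * Real.pi * I * n * r) := by
  rw [expMode, fourier_coe_apply, ofReal_one, div_one]

theorem contDiff_expMode (n : ℤ) : ContDiff ℝ (⊤ : ℕ∞) (expMode n) := by
  rw [funext (expMode_eq_exp n)]
  exact (contDiff_const.mul ofRealCLM.contDiff).cexp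

@[fun_prop] theorem continuous_expMode (n : ℤ) : Continuous (expMode n) :=
  (contDiff_expMode n).continuous

theorem hasDerivAt_expMode (n : ℤ) (r : ℝ) :
    HasDerivAt (expMode n) (2 * Real.pi * I * n * expMode n r) r := by
  have := hasDerivAt_fourier 1 n r
  rwa [ofReal_one, div_one] at this

theorem expMode_zero (n : ℤ) : expMode n 0 = 1 := by simp [expMode_eq_exp]

theorem expMode_add (n : ℤ) (r s : ℝ) : expMode n (r + s) = expMode n r * expMode n s := by
  simp only [expMode_eq_exp, ← exp_add, ofReal_add, mul_add]

theorem expMode_mul_expMode_neg (n : ℤ) (r : ℝ) : expMode n r * expMode (-n) r = 1 := by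
  rw [expMode_eq_exp, expMode_eq_exp, ← exp_add, Int.cast_neg, mul_neg, neg_mul, add_neg_cancel,
    exp_zero]

theorem conj_expMode (n : ℤ) (r : ℝ) : starRingEnd ℂ (expMode n r) = expMode (-n) r :=
  fourier_neg.symm

theorem periodic_expMode (n : ℤ) : (expMode n).Periodic 1 := fun r => by
  simp only [expMode, AddCircle.coe_add_period]

theorem expMode_add_intCast (n : ℤ) (r : ℝ) (m : ℤ) : expMode n (r + m) = expMode n r := by
  simpa only [mul_one] using (periodic_expMode n).int_mul m r

theorem eq_zero_of_fourierCoeff_eq_zero {T : ℝ} [Fact (0 < T)] {F : C(AddCircle T, ℂ)}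
    (h : ∀ n, fourierCoeff F n = 0) : F = 0 := by
  ext x
  have := has_pointwise_sum_fourier_series_of_summable (f := F)
    (by simp only [funext h, summable_zero]) x
  simp only [h, zero_smul] at this
  exact this.unique hasSum_zero

theorem eq_zero_of_intervalIntegral_expMode_mul {φ : ℝ → ℂ} (hφ : Continuous φ)
    (per : φ.Periodic 1) (h : ∀ n, ∫ r in (0 : ℝ)..1, expMode (-n) r * φ r = 0) : φ = 0 := by
  have : Fact ((0 : ℝ) < 1) := ⟨one_pos⟩
  let F : C(UnitAddCircle, ℂ) := ⟨per.lift, continuous_coinduced_dom.2 hφ⟩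
  have hF : F = 0 := eq_zero_of_fourierCoeff_eq_zero fun n => by
    rw [fourierCoeff_eq_intervalIntegral _ n 0, zero_add]
    exact (congrArg _ (h n)).trans (smul_zero _)
  exact funext fun r => DFunLike.congr_fun hF (r : UnitAddCircle)

theorem eq_zero_of_intervalIntegral_expMode_mul_expMode_mul {φ : ℝ × ℝ → ℂ} (hφ : Continuous φ)
    (per_x : ∀ y, (fun x => φ (x, y)).Periodic 1) (per_y : ∀ x, (fun y => φ (x, y)).Periodic 1)
    (h : ∀ k m, ∫ x in (0 : ℝ)..1, ∫ y in (0 : ℝ)..1,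
      expMode (-k) x * (expMode (-m) y * φ (x, y)) = 0) : φ = 0 := by
  have mode_y (m : ℤ) : (fun x => ∫ y in (0 : ℝ)..1, expMode (-m) y * φ (x, y)) = 0 := by
    refine eq_zero_of_intervalIntegral_expMode_mul ?_ (fun x => ?_) fun k => ?_
    · exact intervalIntegral.continuous_parametric_intervalIntegral_of_continuous'
        (f := fun x y => expMode (-m) y * φ (x, y)) (by fun_prop) 0 1
    · simp only [show ∀ y, φ (x + 1, y) = φ (x, y) from fun y => per_x y x]
    · simpa only [intervalIntegral.integral_const_mul] using h k m
  funext ⟨x, y⟩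
  exact congrFun (eq_zero_of_intervalIntegral_expMode_mul (by fun_prop) (per_y x)
    fun m => congrFun (mode_y m) x) y

/-! ### Smooth functions on the Kodaira–Thurston manifold -/

/-- The group `ℝ × H₃(ℝ)`, in the coordinates `(t, x, y, z)`. -/
abbrev R4 : Type := ℝ × ℝ × ℝ × ℝ

/-- The product `g * p` in `ℝ × H₃(ℝ)`, where `(x, y, z) ∈ H₃(ℝ)` stands for the matrix
`[[1, x, z], [0, 1, y], [0, 0, 1]]`. -/
def leftMul (g p : R4) : R4 :=
  (p.1 + g.1, p.2.1 + g.2.1, p.2.2.1 + g.2.2.1, p.2.2.2 + g.2.2.2 + g.2.1 * p.2.2.1)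

/-- Invariance under left multiplication by the integer lattice of `ℝ × H₃(ℝ)`. -/
def IsLatticeInvariant (u : R4 → ℂ) : Prop :=
  ∀ (m k l n : ℤ) (p : R4), u (leftMul (m, k, l, n) p) = u p

theorem KTPeriodic.isLatticeInvariant {f : F4} (h : KTPeriodic f) :
    IsLatticeInvariant fun p => f p.1 p.2.1 p.2.2.1 p.2.2.2 := by
  rintro m k l n ⟨t, x, y, z⟩
  have periodic_t (x y z : ℝ) : (f · x y z).Periodic 1 := fun t => (h t x y z).1
  have periodic_y (t x z : ℝ) : (f t x · z).Periodic 1 := fun y => (h t x y z).2.2.1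
  have periodic_z (t x y : ℝ) : (f t x y ·).Periodic 1 := fun z => (h t x y z).2.2.2
  have periodic_x : (fun s => f t (x + s) y (z + s * y)).Periodic 1 := fun s => by
    have := (h t (x + s) y (z + s * y)).2.1
    rwa [add_assoc, add_assoc, ← add_one_mul s y] at this
  calc f (t + m) (x + k) (y + l) (z + n + k * y)
      = f t (x + k) (y + l) (z + n + k * y) := by
        simpa only [mul_one] using (periodic_t _ _ _).int_mul m t
    _ = f t (x + k) y (z + n + k * y) := by
        simpa only [mul_one] using (periodic_y _ _ _).int_mul l y
    _ = f t (x + k) y (z + k * y) := by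
        simpa only [mul_one, add_right_comm] using (periodic_z _ _ _).int_mul n (z + k * y)
    _ = f t x y z := by
        simpa only [mul_one, zero_mul, add_zero] using periodic_x.int_mul_eq k

theorem IsLatticeInvariant.ktPeriodic {u : R4 → ℂ} (h : IsLatticeInvariant u) :
    KTPeriodic fun t x y z => u (t, x, y, z) := fun t x y z => by
  have shift := fun m k l n => h m k l n (t, x, y, z)
  exact ⟨by simpa [leftMul] using shift 1 0 0 0, by simpa [leftMul] using shift 0 1 0 0,
    by simpa [leftMul] using shift 0 0 1 0, by simpa [leftMul] using shift 0 0 0 1⟩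

/-- The smooth functions on the manifold, as a space of functions of four real variables. -/
def ktSubmodule : Submodule ℂ F4 where
  carrier := {f | Smooth4 f ∧ KTPeriodic f}
  add_mem' {f g} hf hg := ⟨hf.1.add hg.1, fun t x y z => by
    simp only [Pi.add_apply, hf.2 t x y z, hg.2 t x y z, and_self]⟩
  zero_mem' := ⟨contDiff_const, fun _ _ _ _ => ⟨rfl, rfl, rfl, rfl⟩⟩
  smul_mem' c f hf := ⟨contDiff_const.mul hf.1, fun t x y z => by
    simp only [Pi.smul_apply, hf.2 t x y z, and_self]⟩

/-- The space of smooth functions on the manifold. It is a type of its own, so that it can carry the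
`L²` norm instead of the topology of pointwise convergence. -/
def KT : Type := ktSubmodule

namespace KT

instance : AddCommGroup KT := inferInstanceAs (AddCommGroup ktSubmodule)

instance : Module ℂ KT := inferInstanceAs (Module ℂ ktSubmodule)

instance : FunLike KT R4 ℂ where
  coe u p := u.1 p.1 p.2.1 p.2.2.1 p.2.2.2
  coe_injective _ _ h := Subtype.ext <| by
    funext t x y z
    exact congrFun h (t, x, y, z)

@[ext] theorem ext {u v : KT} (h : ∀ p, u p = v p) : u = v := DFunLike.ext u v h

@[simp] theorem zero_apply (p : R4) : (0 : KT) p = 0 := rfl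
@[simp] theorem add_apply (u v : KT) (p : R4) : (u + v) p = u p + v p := rfl
@[simp] theorem neg_apply (u : KT) (p : R4) : (-u) p = -u p := rfl
@[simp] theorem sub_apply (u v : KT) (p : R4) : (u - v) p = u p - v p := rfl
@[simp] theorem smul_apply (c : ℂ) (u : KT) (p : R4) : (c • u) p = c * u p := rfl

theorem contDiff (u : KT) : ContDiff ℝ (⊤ : ℕ∞) u := u.2.1

theorem differentiable (u : KT) : Differentiable ℝ u := u.contDiff.differentiable (by simp)

@[fun_prop] theorem continuous (u : KT) : Continuous u := u.contDiff.continuous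

theorem isLatticeInvariant (u : KT) : IsLatticeInvariant u := u.2.2.isLatticeInvariant

/-- A smooth lattice-invariant function on `ℝ × H₃(ℝ)`, as a function on the manifold. -/
def mk (φ : R4 → ℂ) (hφ : ContDiff ℝ (⊤ : ℕ∞) φ) (inv : IsLatticeInvariant φ) : KT :=
  ⟨fun t x y z => φ (t, x, y, z), hφ, inv.ktPeriodic⟩

@[simp] theorem mk_apply {φ : R4 → ℂ} (hφ : ContDiff ℝ (⊤ : ℕ∞) φ) (inv : IsLatticeInvariant φ)
    (p : R4) : mk φ hφ inv p = φ p := rfl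

theorem periodic_t (u : KT) (x y z : ℝ) : (fun t => u (t, x, y, z)).Periodic 1 :=
  fun t => (u.2.2 t x y z).1

theorem apply_x_add_one (u : KT) (t x y z : ℝ) : u (t, x + 1, y, z + y) = u (t, x, y, z) :=
  (u.2.2 t x y z).2.1

theorem periodic_y (u : KT) (t x z : ℝ) : (fun y => u (t, x, y, z)).Periodic 1 :=
  fun y => (u.2.2 t x y z).2.2.1

theorem periodic_z (u : KT) (t x y : ℝ) : (fun z => u (t, x, y, z)).Periodic 1 :=
  fun z => (u.2.2 t x y z).2.2.2

/-! ### Left-invariant derivatives -/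

/-- The left-invariant vector field `k₁ ∂/∂t + k₂ ∂/∂x + k₃ (∂/∂y + x ∂/∂z) + k₄ ∂/∂z`. -/
def invariantField (k p : R4) : R4 := (k.1, k.2.1, k.2.2.1, k.2.2.1 * p.2.1 + k.2.2.2)

theorem contDiff_invariantField (k : R4) : ContDiff ℝ (⊤ : ℕ∞) (invariantField k) := by
  unfold invariantField
  fun_prop

theorem leftMul_add_smul_invariantField (g k p : R4) (s : ℝ) :
    leftMul g (p + s • invariantField k p) =
      leftMul g p + s • invariantField k (leftMul g p) := by
  ext <;> simp only [leftMul, invariantField, Prod.fst_add, Prod.snd_add, Prod.smul_fst,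
    Prod.smul_snd, smul_eq_mul] <;> ring

theorem fderiv_leftMul (u : KT) (k p : R4) {g : R4} (hg : ∀ q, u (leftMul g q) = u q) :
    fderiv ℝ u (leftMul g p) (invariantField k (leftMul g p)) =
      fderiv ℝ u p (invariantField k p) := by
  rw [← (u.differentiable _).lineDeriv_eq_fderiv, ← (u.differentiable _).lineDeriv_eq_fderiv]
  simp only [lineDeriv, ← leftMul_add_smul_invariantField, hg]

/-- The derivative along the left-invariant vector field with coefficients `k`. -/
noncomputable def lieDeriv (k : R4) : Module.End ℂ KT where
  toFun u := mk (fun p => fderiv ℝ u p (invariantField k p))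
    ((u.contDiff.fderiv_right (by simp)).clm_apply (contDiff_invariantField k))
    fun m k' l n p => u.fderiv_leftMul k p (u.isLatticeInvariant m k' l n)
  map_add' u v := by
    ext p
    exact congrArg (· (invariantField k p)) (fderiv_add (u.differentiable p) (v.differentiable p))
  map_smul' c u := by
    ext p
    exact congrArg (· (invariantField k p)) (fderiv_const_smul (u.differentiable p) c)

theorem lieDeriv_apply (k : R4) (u : KT) (p : R4) :
    lieDeriv k u p = fderiv ℝ u p (invariantField k p) := rfl

theorem lieDeriv_apply_of_hasDerivAt {k : R4} {u : KT} {p : R4} {c : ℂ}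
    (h : HasDerivAt (fun s : ℝ => u (p + s • invariantField k p)) c 0) : lieDeriv k u p = c := by
  rw [lieDeriv_apply, ← (u.differentiable p).lineDeriv_eq_fderiv]
  exact h.deriv

theorem lieBracket_invariantField (k l p : R4) :
    VectorField.lieBracket ℝ (invariantField k) (invariantField l) p =
      (k.2.1 * l.2.2.1 - k.2.2.1 * l.2.1) • invariantField (0, 0, 0, 1) p := by
  have fderiv_field (k v : R4) : fderiv ℝ (invariantField k) p v = (0, 0, 0, k.2.2.1 * v.2.1) := by
    rw [← ((contDiff_invariantField k).differentiable (by simp) p).lineDeriv_eq_fderiv]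
    have affine (s : ℝ) : invariantField k (p + s • v) =
        invariantField k p + s • (0, 0, 0, k.2.2.1 * v.2.1) := by
      ext <;> simp only [invariantField, Prod.snd_add, Prod.smul_snd, Prod.fst_add, Prod.smul_fst,
        smul_eq_mul, Prod.smul_mk, mul_zero, Prod.mk_add_mk, add_zero]
      ring
    simp only [lineDeriv, affine]
    simpa using (((hasDerivAt_id (0 : ℝ)).smul_const
      ((0, 0, 0, k.2.2.1 * v.2.1) : R4)).const_add (invariantField k p)).deriv
  simp only [VectorField.lieBracket, fderiv_field, invariantField]
  ext <;> simp only [Prod.mk_sub_mk, sub_self, zero_mul, zero_add, Prod.smul_mk, smul_eq_mul,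
    mul_zero, mul_one, sub_left_inj]
  ring

theorem lie_lieDeriv (k l : R4) :
    ⁅lieDeriv k, lieDeriv l⁆ =
      ((k.2.1 * l.2.2.1 - k.2.2.1 * l.2.1 : ℝ) : ℂ) • lieDeriv (0, 0, 0, 1) := by
  have smooth_field (k : R4) := (contDiff_invariantField k).differentiable (by simp)
  ext u p
  have commutator := VectorField.fderiv_apply_lieBracket (𝕜 := ℝ) u.contDiff.contDiffAt
    (by simpa using WithTop.coe_le_coe.2 (le_top (a := (2 : ℕ∞))))
    (smooth_field l p) (smooth_field k p)
  rw [lieBracket_invariantField, map_smul, real_smul] at commutator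
  exact commutator.symm

theorem hasDerivAt_comp (u : KT) {γ : ℝ → R4} {v : R4} {r : ℝ} (h : HasDerivAt γ v r) :
    HasDerivAt (fun s => u (γ s)) (fderiv ℝ u (γ r) v) r :=
  (u.differentiable (γ r)).hasFDerivAt.comp_hasDerivAt r h

theorem hasDerivAt_t (u : KT) (t x y z : ℝ) :
    HasDerivAt (fun s => u (s, x, y, z)) (fderiv ℝ u (t, x, y, z) (1, 0, 0, 0)) t :=
  u.hasDerivAt_comp ((hasDerivAt_id t).prodMk (hasDerivAt_const t _))

theorem hasDerivAt_x (u : KT) (t x y z : ℝ) :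
    HasDerivAt (fun s => u (t, s, y, z)) (fderiv ℝ u (t, x, y, z) (0, 1, 0, 0)) x :=
  u.hasDerivAt_comp ((hasDerivAt_const x _).prodMk
    ((hasDerivAt_id x).prodMk (hasDerivAt_const x _)))

theorem hasDerivAt_y (u : KT) (t x y z : ℝ) :
    HasDerivAt (fun s => u (t, x, s, z)) (fderiv ℝ u (t, x, y, z) (0, 0, 1, 0)) y :=
  u.hasDerivAt_comp ((hasDerivAt_const y _).prodMk ((hasDerivAt_const y _).prodMk
    ((hasDerivAt_id y).prodMk (hasDerivAt_const y _))))

theorem hasDerivAt_z (u : KT) (t x y z : ℝ) :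
    HasDerivAt (fun s => u (t, x, y, s)) (fderiv ℝ u (t, x, y, z) (0, 0, 0, 1)) z :=
  u.hasDerivAt_comp ((hasDerivAt_const z _).prodMk ((hasDerivAt_const z _).prodMk
    ((hasDerivAt_const z _).prodMk (hasDerivAt_id z))))

@[fun_prop] theorem continuous_fderiv_apply (u : KT) (v : R4) :
    Continuous fun p => fderiv ℝ u p v :=
  (u.contDiff.continuous_fderiv (by simp)).clm_apply continuous_const

theorem lieDeriv_apply_eq_sum (k : R4) (u : KT) (p : R4) :
    lieDeriv k u p = k.1 * fderiv ℝ u p (1, 0, 0, 0) + k.2.1 * fderiv ℝ u p (0, 1, 0, 0) +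
      k.2.2.1 * fderiv ℝ u p (0, 0, 1, 0) +
      (k.2.2.1 * p.2.1 + k.2.2.2 : ℝ) * fderiv ℝ u p (0, 0, 0, 1) := by
  simp only [← real_smul, ← map_smul, ← map_add, lieDeriv_apply]
  simp [invariantField]

/-! ### Integration by parts -/

/-- The unit cube, a fundamental domain for the integer lattice. -/
def cube : Set R4 := Set.Icc 0 1 ×ˢ Set.Icc 0 1 ×ˢ Set.Icc 0 1 ×ˢ Set.Icc 0 1

theorem isCompact_unitSquare : IsCompact (Set.Icc (0 : ℝ) 1 ×ˢ Set.Icc (0 : ℝ) 1) :=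
  isCompact_Icc.prod isCompact_Icc

theorem isCompact_unitCube :
    IsCompact (Set.Icc (0 : ℝ) 1 ×ˢ Set.Icc (0 : ℝ) 1 ×ˢ Set.Icc (0 : ℝ) 1) :=
  isCompact_Icc.prod isCompact_unitSquare

theorem isCompact_cube : IsCompact cube := isCompact_Icc.prod isCompact_unitCube

theorem integrableOn_cube {φ : R4 → ℂ} (hφ : Continuous φ) : IntegrableOn φ cube :=
  hφ.continuousOn.integrableOn_compact isCompact_cube

theorem setIntegral_Icc_of_hasDerivAt {φ φ' : ℝ → ℂ} (h : ∀ r, HasDerivAt φ (φ' r) r)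
    (hφ' : Continuous φ') : ∫ r in Set.Icc (0 : ℝ) 1, φ' r = φ 1 - φ 0 := by
  rw [integral_Icc_eq_integral_Ioc, ← intervalIntegral.integral_of_le zero_le_one]
  exact intervalIntegral.integral_eq_sub_of_hasDerivAt (fun r _ => h r)
    (hφ'.intervalIntegrable _ _)

theorem setIntegral_Icc_comp_add_right {φ : ℝ → ℂ} (h : φ.Periodic 1) (s : ℝ) :
    ∫ r in Set.Icc (0 : ℝ) 1, φ (r + s) = ∫ r in Set.Icc (0 : ℝ) 1, φ r := by
  simp only [integral_Icc_eq_integral_Ioc, ← intervalIntegral.integral_of_le zero_le_one]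
  rw [intervalIntegral.integral_comp_add_right, add_comm 1 s, zero_add,
    h.intervalIntegral_add_eq s 0, zero_add]

theorem setIntegral_cube {φ : R4 → ℂ} (hφ : Continuous φ) :
    ∫ p in cube, φ p = ∫ t in Set.Icc (0 : ℝ) 1, ∫ x in Set.Icc (0 : ℝ) 1,
      ∫ w in Set.Icc (0 : ℝ) 1 ×ˢ Set.Icc (0 : ℝ) 1, φ (t, x, w) := by
  rw [cube, Measure.volume_eq_prod,
    setIntegral_prod_of_isCompact hφ isCompact_Icc isCompact_unitCube]
  exact integral_congr_ae <| .of_forall fun t =>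
    setIntegral_prod_of_isCompact (φ := fun w => φ (t, w)) (by fun_prop) isCompact_Icc
      isCompact_unitSquare

theorem setIntegral_cube_fderiv_t (u : KT) : ∫ p in cube, fderiv ℝ u p (1, 0, 0, 0) = 0 := by
  rw [cube, Measure.volume_eq_prod,
    setIntegral_prod_symm_of_isCompact (by fun_prop) isCompact_Icc isCompact_unitCube]
  refine setIntegral_eq_zero_of_forall_eq_zero fun ⟨x, y, z⟩ _ => ?_
  rw [setIntegral_Icc_of_hasDerivAt (fun r => u.hasDerivAt_t r x y z) (by fun_prop),
    (u.periodic_t x y z).eq, sub_self]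

/-- The faces `x = 0` and `x = 1` of the cube are identified by a shear in `z`, which periodicity in
`z` absorbs after integration over `z`. -/
theorem setIntegral_cube_fderiv_x (u : KT) : ∫ p in cube, fderiv ℝ u p (0, 1, 0, 0) = 0 := by
  rw [cube, Measure.volume_eq_prod,
    setIntegral_prod_of_isCompact (by fun_prop) isCompact_Icc isCompact_unitCube]
  refine setIntegral_eq_zero_of_forall_eq_zero fun t _ => ?_
  rw [Measure.volume_eq_prod,
    setIntegral_prod_symm_of_isCompact (by fun_prop) isCompact_Icc isCompact_unitSquare]
  have faces (w : ℝ × ℝ) : ∫ x in Set.Icc (0 : ℝ) 1, fderiv ℝ u (t, x, w) (0, 1, 0, 0) =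
      u (t, 0, w.1, w.2 + -w.1) - u (t, 0, w.1, w.2) := by
    rw [setIntegral_Icc_of_hasDerivAt (fun r => u.hasDerivAt_x t r w.1 w.2) (by fun_prop),
      sub_left_inj]
    simpa only [zero_add, neg_add_cancel_right] using u.apply_x_add_one t 0 w.1 (w.2 + -w.1)
  simp only [faces]
  rw [Measure.volume_eq_prod,
    setIntegral_prod_of_isCompact (by fun_prop) isCompact_Icc isCompact_Icc]
  refine setIntegral_eq_zero_of_forall_eq_zero fun y _ => ?_
  dsimp only
  rw [integral_sub, setIntegral_Icc_comp_add_right (u.periodic_z t 0 y), sub_self]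
  all_goals exact (by fun_prop : Continuous _).continuousOn.integrableOn_compact isCompact_Icc

theorem setIntegral_cube_fderiv_y (u : KT) : ∫ p in cube, fderiv ℝ u p (0, 0, 1, 0) = 0 := by
  rw [setIntegral_cube (by fun_prop)]
  refine setIntegral_eq_zero_of_forall_eq_zero fun t _ =>
    setIntegral_eq_zero_of_forall_eq_zero fun x _ => ?_
  rw [Measure.volume_eq_prod,
    setIntegral_prod_symm_of_isCompact (by fun_prop) isCompact_Icc isCompact_Icc]
  refine setIntegral_eq_zero_of_forall_eq_zero fun z _ => ?_
  rw [setIntegral_Icc_of_hasDerivAt (fun r => u.hasDerivAt_y t x r z) (by fun_prop),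
    (u.periodic_y t x z).eq, sub_self]

theorem setIntegral_cube_mul_fderiv_z (u : KT) {m : ℝ → ℂ} (hm : Continuous m) :
    ∫ p in cube, m p.2.1 * fderiv ℝ u p (0, 0, 0, 1) = 0 := by
  rw [setIntegral_cube (by fun_prop)]
  refine setIntegral_eq_zero_of_forall_eq_zero fun t _ =>
    setIntegral_eq_zero_of_forall_eq_zero fun x _ => ?_
  rw [Measure.volume_eq_prod,
    setIntegral_prod_of_isCompact (by fun_prop) isCompact_Icc isCompact_Icc]
  refine setIntegral_eq_zero_of_forall_eq_zero fun y _ => ?_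
  dsimp only
  rw [integral_const_mul, setIntegral_Icc_of_hasDerivAt (fun r => u.hasDerivAt_z t x y r)
    (by fun_prop), (u.periodic_z t x y).eq, sub_self, mul_zero]

theorem setIntegral_cube_lieDeriv (k : R4) (u : KT) : ∫ p in cube, lieDeriv k u p = 0 := by
  simp only [lieDeriv_apply_eq_sum]
  rw [integral_add, integral_add, integral_add, integral_const_mul, integral_const_mul,
    integral_const_mul, setIntegral_cube_fderiv_t, setIntegral_cube_fderiv_x,
    setIntegral_cube_fderiv_y,
    u.setIntegral_cube_mul_fderiv_z (m := fun x => (k.2.2.1 * x + k.2.2.2 : ℝ)) (by fun_prop)]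
  · simp only [mul_zero, add_zero]
  all_goals exact integrableOn_cube (by fun_prop)

/-! ### The `L²` inner product -/

/-- The function `ū v`, the integrand of the `L²` inner product. -/
def conjMul (u v : KT) : KT :=
  mk (fun p => starRingEnd ℂ (u p) * v p) ((conjCLE.contDiff.comp u.contDiff).mul v.contDiff)
    fun m k l n p => by
      dsimp only
      rw [u.isLatticeInvariant, v.isLatticeInvariant]

theorem conjMul_apply (u v : KT) (p : R4) : conjMul u v p = starRingEnd ℂ (u p) * v p := rfl

theorem conjMul_self_apply (u : KT) (p : R4) : conjMul u u p = ((‖u p‖ ^ 2 : ℝ) : ℂ) := by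
  rw [conjMul_apply, conj_mul', ofReal_pow]

theorem lieDeriv_conjMul (k : R4) (u v : KT) :
    lieDeriv k (conjMul u v) = conjMul (lieDeriv k u) v + conjMul u (lieDeriv k v) := by
  ext p
  have conj_u : HasFDerivAt (fun p => starRingEnd ℂ (u p))
      ((conjCLE : ℂ →L[ℝ] ℂ).comp (fderiv ℝ u p)) p :=
    conjCLE.hasFDerivAt.comp p (u.differentiable p).hasFDerivAt
  have product_rule : fderiv ℝ (conjMul u v) p = _ :=
    (conj_u.mul (v.differentiable p).hasFDerivAt).fderiv
  rw [lieDeriv_apply, product_rule, add_apply, conjMul_apply, conjMul_apply, lieDeriv_apply,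
    lieDeriv_apply]
  simp only [_root_.add_apply, _root_.smul_apply, smul_eq_mul, ContinuousLinearMap.comp_apply,
    ContinuousLinearEquiv.coe_coe, ContinuousAlgEquiv.coeCLE_apply, conjCAE_apply]
  ring

theorem exists_mem_cube_apply_eq (u : KT) (p : R4) : ∃ q ∈ cube, u q = u p := by
  have fract_mem (r : ℝ) : r + (-⌊r⌋ : ℤ) ∈ Set.Icc (0 : ℝ) 1 := by
    rw [Int.cast_neg, ← sub_eq_add_neg, Int.self_sub_floor]
    exact ⟨Int.fract_nonneg r, (Int.fract_lt_one r).le⟩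
  refine ⟨_, ⟨fract_mem p.1, fract_mem p.2.1, fract_mem p.2.2.1, ?_⟩, u.isLatticeInvariant _ _ _
    (-⌊p.2.2.2 + (-⌊p.2.1⌋ : ℤ) * p.2.2.1⌋) p⟩
  simpa only [leftMul, add_right_comm] using fract_mem (p.2.2.2 + (-⌊p.2.1⌋ : ℤ) * p.2.2.1)

theorem cube_subset_closure_interior : cube ⊆ closure (interior cube) := by
  simp only [cube, interior_prod_eq, closure_prod_eq, interior_Icc,
    closure_Ioo (zero_ne_one : (0 : ℝ) ≠ 1), subset_rfl]

theorem eq_zero_of_setIntegral_conjMul_self {u : KT} (h : ∫ p in cube, conjMul u u p = 0) :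
    u = 0 := by
  have integral_norm_sq : ∫ p in cube, ‖u p‖ ^ 2 = 0 := by
    simp only [conjMul_self_apply, integral_complex_ofReal] at h
    exact_mod_cast h
  rw [setIntegral_eq_zero_iff_of_nonneg_ae (.of_forall fun p => by positivity)
    ((by fun_prop : Continuous _).continuousOn.integrableOn_compact isCompact_cube)]
    at integral_norm_sq
  have zero_on_cube : Set.EqOn u 0 cube := by
    refine Measure.eqOn_of_ae_eq (μ := volume) ?_ u.continuous.continuousOn continuousOn_const
      cube_subset_closure_interior
    filter_upwards [integral_norm_sq] with p hp
    simpa using hp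
  ext p
  obtain ⟨q, hq, hqp⟩ := u.exists_mem_cube_apply_eq p
  rw [← hqp, zero_on_cube hq, Pi.zero_apply, zero_apply]

/-- The `L²` inner product over the unit cube. -/
@[reducible]
noncomputable def innerProductCore : InnerProductSpace.Core ℂ KT where
  inner u v := ∫ p in cube, conjMul u v p
  conj_inner_symm u v := by
    simp only [← integral_conj, conjMul_apply, map_mul, conj_conj, mul_comm]
  re_inner_nonneg u := by
    simp only [conjMul_self_apply, integral_complex_ofReal]
    exact integral_nonneg fun p => by positivity
  add_left u v w := by
    rw [← integral_add (integrableOn_cube (by fun_prop)) (integrableOn_cube (by fun_prop))]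
    simp only [conjMul_apply, add_apply, map_add, add_mul]
  smul_left u v r := by
    simp only [← integral_const_mul, conjMul_apply, smul_apply, map_mul, mul_assoc]
  definite _ := eq_zero_of_setIntegral_conjMul_self

noncomputable instance : NormedAddCommGroup KT := innerProductCore.toNormedAddCommGroup

noncomputable instance : InnerProductSpace ℂ KT := InnerProductSpace.ofCore innerProductCore.toCore

theorem inner_eq_setIntegral (u v : KT) : inner ℂ u v = ∫ p in cube, conjMul u v p := rfl

theorem isSkew_lieDeriv (k : R4) : IsSkew (lieDeriv k) := fun u v => by
  have h := setIntegral_cube_lieDeriv k (conjMul u v)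
  simp only [lieDeriv_conjMul, add_apply] at h
  rw [integral_add (integrableOn_cube (by fun_prop)) (integrableOn_cube (by fun_prop))] at h
  exact eq_neg_of_add_eq_zero_left h

theorem commute_lieDeriv {k l : R4} (h : k.2.1 * l.2.2.1 = k.2.2.1 * l.2.1) :
    Commute (lieDeriv k) (lieDeriv l) := by
  rw [commute_iff_lie_eq, lie_lieDeriv, h, sub_self, ofReal_zero, zero_smul]

/-- The left-invariant vector fields of `ℝ × H₃(ℝ)`, acting on the functions on the manifold. -/
noncomputable def rep : HeisenbergRep KT where
  T := lieDeriv (1, 0, 0, 0)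
  X := lieDeriv (0, 1, 0, 0)
  Y := lieDeriv (0, 0, 1, 0)
  Z := lieDeriv (0, 0, 0, 1)
  isSkew_T := isSkew_lieDeriv _
  isSkew_X := isSkew_lieDeriv _
  isSkew_Y := isSkew_lieDeriv _
  isSkew_Z := isSkew_lieDeriv _
  commute_TX := commute_lieDeriv (by simp)
  commute_TY := commute_lieDeriv (by simp)
  commute_TZ := commute_lieDeriv (by simp)
  commute_XZ := commute_lieDeriv (by simp)
  commute_YZ := commute_lieDeriv (by simp)
  lie_XY := by simp [lie_lieDeriv]

/-! ### Fourier modes in `z` -/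

/-- The element `(0, 0, 0, r)` of the centre of `ℝ × H₃(ℝ)`. -/
def central (r : ℝ) : R4 := (0, 0, 0, r)

theorem leftMul_add_central (g p : R4) (r : ℝ) :
    leftMul g (p + central r) = leftMul g p + central r := by
  ext <;> simp only [leftMul, central, Prod.fst_add, Prod.snd_add, Prod.mk_add_mk, add_zero]
  ring

theorem invariantField_add_central (k p : R4) (r : ℝ) :
    invariantField k (p + central r) = invariantField k p := by
  simp [invariantField, central]

theorem central_zero : central 0 = 0 := rfl

theorem central_add (r s : ℝ) : central (r + s) = central r + central s := by simp [central]

@[fun_prop] theorem continuous_central : Continuous central := by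
  unfold central
  fun_prop

theorem periodic_central (u : KT) (p : R4) : (fun r => u (p + central r)).Periodic 1 := fun r => by
  have add_central (s : ℝ) : p + central s = (p.1, p.2.1, p.2.2.1, p.2.2.2 + s) := by
    ext <;> simp [central]
  simpa only [add_central, add_assoc] using u.periodic_z p.1 p.2.1 p.2.2.1 (p.2.2.2 + r)

theorem contDiff_expMode_mul_central (n : ℤ) (u : KT) :
    ContDiff ℝ (⊤ : ℕ∞) fun q : R4 × ℝ => expMode (-n) q.2 * u (q.1 + central q.2) := by
  refine ((contDiff_expMode (-n)).comp contDiff_snd).mul (u.contDiff.comp (contDiff_fst.add ?_))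
  unfold central
  fun_prop

/-- The `n`-th Fourier mode in `z`, which projects to the eigenspace `∂/∂z = 2πin`. -/
noncomputable def zMode (n : ℤ) : Module.End ℂ KT where
  toFun u := mk (fun p => ∫ r in (0 : ℝ)..1, expMode (-n) r * u (p + central r))
    (contDiff_infty_parametric_intervalIntegral (contDiff_expMode_mul_central n u))
    fun m k l n' p => by simp only [← leftMul_add_central, u.isLatticeInvariant m k l n']
  map_add' u v := by
    ext p
    simp only [mk_apply, add_apply, mul_add]
    exact intervalIntegral.integral_add (Continuous.intervalIntegrable (by fun_prop) _ _)
      (Continuous.intervalIntegrable (by fun_prop) _ _)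
  map_smul' c u := by
    ext p
    simp only [mk_apply, smul_apply, mul_left_comm _ c, intervalIntegral.integral_const_mul,
      RingHom.id_apply]
    rfl

theorem zMode_apply (n : ℤ) (u : KT) (p : R4) :
    zMode n u p = ∫ r in (0 : ℝ)..1, expMode (-n) r * u (p + central r) := rfl

theorem lieDeriv_zMode (k : R4) (n : ℤ) (u : KT) :
    lieDeriv k (zMode n u) = zMode n (lieDeriv k u) := by
  ext p
  refine (fderiv_parametric_intervalIntegral_apply
    ((contDiff_expMode_mul_central n u).of_le (by simp)) p (invariantField k p)).trans ?_
  refine intervalIntegral.integral_congr fun r _ => ?_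
  have translate : DifferentiableAt ℝ (fun q => u (q + central r)) p :=
    (u.differentiable _).comp p (by fun_prop)
  simp only [fderiv_const_mul translate, fderiv_comp_add_right, lieDeriv_apply,
    invariantField_add_central]
  rfl

theorem zMode_apply_add_central (n : ℤ) (u : KT) (p : R4) (s : ℝ) :
    zMode n u (p + central s) = expMode n s * zMode n u p := by
  have per : (fun r => expMode (-n) r * u (p + central r)).Periodic 1 :=
    (periodic_expMode (-n)).mul (u.periodic_central p)
  have shift (r : ℝ) : expMode (-n) r * u (p + central s + central r) =
      expMode n s * (expMode (-n) (r + s) * u (p + central (r + s))) := by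
    rw [add_assoc p, ← central_add, add_comm s r, expMode_add, ← mul_assoc (expMode n s),
      mul_left_comm (expMode n s), expMode_mul_expMode_neg, mul_one]
  simp only [zMode_apply, shift, intervalIntegral.integral_const_mul]
  rw [intervalIntegral.integral_comp_add_right
    (fun r => expMode (-n) r * u (p + central r)), zero_add, add_comm 1 s,
    per.intervalIntegral_add_eq s 0, zero_add]

theorem lieDeriv_z_zMode (n : ℤ) (u : KT) :
    lieDeriv (0, 0, 0, 1) (zMode n u) = (I * (2 * Real.pi * n : ℝ)) • zMode n u := by
  ext p
  refine lieDeriv_apply_of_hasDerivAt ?_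
  have field (s : ℝ) : s • invariantField (0, 0, 0, 1) p = central s := by
    simp [invariantField, central]
  simp only [field, zMode_apply_add_central, smul_apply]
  refine ((hasDerivAt_expMode n 0).mul_const _).congr_deriv ?_
  rw [expMode_zero]
  push_cast
  ring

theorem eq_zero_of_zMode_eq_zero {u : KT} (h : ∀ n, zMode n u = 0) : u = 0 := by
  ext p
  have := eq_zero_of_intervalIntegral_expMode_mul (by fun_prop) (u.periodic_central p)
    fun n => DFunLike.congr_fun (h n) p
  simpa only [central_zero, add_zero, Pi.zero_apply, zero_apply] using congrFun this 0

theorem lieDeriv_z_eq_zero {u : KT} (h : ∀ n ≠ 0, zMode n u = 0) :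
    lieDeriv (0, 0, 0, 1) u = 0 := by
  refine eq_zero_of_zMode_eq_zero fun n => ?_
  rw [← lieDeriv_zMode, lieDeriv_z_zMode]
  rcases eq_or_ne n 0 with rfl | hn
  · simp
  · rw [h n hn, smul_zero]

theorem isSolution_zMode {a b : ℝ} {f g : KT} (h : rep.IsSolution a b f g) (n : ℤ) :
    rep.IsSolution a b (zMode n f) (zMode n g) := by
  have map_eqs := And.intro (congrArg (zMode n) h.1) (congrArg (zMode n) h.2)
  simpa only [HeisenbergRep.IsSolution, rep, map_add, map_sub, map_neg, map_smul, lieDeriv_zMode]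
    using map_eqs

/-- Each nonzero Fourier mode in `z` of a solution is again a solution, hence vanishes off
resonance. -/
theorem z_eq_zero_of_isSolution {a b : ℝ} (hb : NonResonant b) {f g : KT}
    (h : rep.IsSolution a b f g) : rep.Z f = 0 ∧ rep.Z g = 0 := by
  have mode_eq_zero (n : ℤ) (hn : n ≠ 0) : zMode n f = 0 ∧ zMode n g = 0 :=
    (isSolution_zMode h n).eq_zero_of_Z_eigenvector (by simp [hn, Real.pi_ne_zero])
      (lieDeriv_z_zMode n f) (lieDeriv_z_zMode n g) (hb n hn)
  exact ⟨lieDeriv_z_eq_zero fun n hn => (mode_eq_zero n hn).1,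
    lieDeriv_z_eq_zero fun n hn => (mode_eq_zero n hn).2⟩

/-! ### Characters in `(x, y)` -/

theorem apply_eq_of_lieDeriv_eq_zero {u : KT} (hT : lieDeriv (1, 0, 0, 0) u = 0)
    (hZ : lieDeriv (0, 0, 0, 1) u = 0) (t x y z : ℝ) : u (t, x, y, z) = u (0, x, y, 0) := by
  have deriv_t (p : R4) : fderiv ℝ u p (1, 0, 0, 0) = 0 := by
    simpa [lieDeriv_apply_eq_sum] using DFunLike.congr_fun hT p
  have deriv_z (p : R4) : fderiv ℝ u p (0, 0, 0, 1) = 0 := by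
    simpa [lieDeriv_apply_eq_sum] using DFunLike.congr_fun hZ p
  calc u (t, x, y, z) = u (0, x, y, z) :=
        is_const_of_deriv_eq_zero (fun s => (u.hasDerivAt_t s x y z).differentiableAt)
          (fun s => (u.hasDerivAt_t s x y z).deriv.trans (deriv_t _)) t 0
    _ = u (0, x, y, 0) :=
        is_const_of_deriv_eq_zero (fun s => (u.hasDerivAt_z 0 x y s).differentiableAt)
          (fun s => (u.hasDerivAt_z 0 x y s).deriv.trans (deriv_z _)) z 0

/-- The function `e^{2πi(kx + my)}` on the manifold, for the Gaussian integer `p = k + mi`. -/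
noncomputable def char (p : GaussianInt) : KT :=
  mk (fun q => expMode p.re q.2.1 * expMode p.im q.2.2.1)
    (((contDiff_expMode p.re).comp contDiff_snd.fst).mul
      ((contDiff_expMode p.im).comp contDiff_snd.snd.fst))
    fun m k l n q => by simp only [leftMul, expMode_add_intCast]

theorem char_apply (p : GaussianInt) (q : R4) :
    char p q = expMode p.re q.2.1 * expMode p.im q.2.2.1 := rfl

theorem lieDeriv_char (k : R4) (p : GaussianInt) :
    lieDeriv k (char p) = (2 * Real.pi * I * (k.2.1 * p.re + k.2.2.1 * p.im)) • char p := by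
  ext q
  refine lieDeriv_apply_of_hasDerivAt ?_
  have along_line (n : ℤ) (x v : ℝ) : HasDerivAt (fun s : ℝ => expMode n (x + s * v))
      (v • (2 * Real.pi * I * n * expMode n x)) 0 := by
    refine HasDerivAt.scomp (g₁ := expMode n) 0 ?_ ((hasDerivAt_mul_const v).const_add x)
    simpa only [zero_mul, add_zero] using hasDerivAt_expMode n x
  refine ((along_line p.re q.2.1 k.2.1).mul (along_line p.im q.2.2.1 k.2.2.1)).congr_deriv ?_
  simp only [zero_mul, add_zero, real_smul, smul_apply, char_apply]
  ring

theorem inner_char_lieDeriv (k : R4) (p : GaussianInt) (u : KT) :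
    inner ℂ (char p) (lieDeriv k u) =
      2 * Real.pi * I * (k.2.1 * p.re + k.2.2.1 * p.im) * inner ℂ (char p) u := by
  have skew := isSkew_lieDeriv k (char p) u
  simp only [lieDeriv_char, inner_smul_left, map_mul, map_add, map_ofNat, conj_ofReal, conj_I,
    map_intCast] at skew
  linear_combination skew

theorem inner_char_self (p : GaussianInt) : inner ℂ (char p) (char p) = (1 : ℂ) := by
  have integrand_eq_one (q : R4) : conjMul (char p) (char p) q = 1 := by
    rw [conjMul_apply, char_apply, map_mul, conj_expMode, conj_expMode, mul_mul_mul_comm,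
      mul_comm (expMode (-p.re) _), mul_comm (expMode (-p.im) _), expMode_mul_expMode_neg,
      expMode_mul_expMode_neg, one_mul]
  simp only [inner_eq_setIntegral, integrand_eq_one, setIntegral_const, measureReal_def, cube,
    Measure.volume_eq_prod, Measure.prod_prod, Real.volume_Icc]
  simp

/-- Distinct characters are eigenvectors of the skew-symmetric operators `X` and `Y` for distinct
pairs of eigenvalues. -/
theorem inner_char_of_ne {p q : GaussianInt} (h : p ≠ q) :
    inner ℂ (char p) (char q) = (0 : ℂ) := by
  have eigenvalues_eq (k : R4) : 2 * Real.pi * I * (k.2.1 * q.re + k.2.2.1 * q.im) *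
      inner ℂ (char p) (char q) = 2 * Real.pi * I * (k.2.1 * p.re + k.2.2.1 * p.im) *
        inner ℂ (char p) (char q) := by
    rw [← inner_char_lieDeriv, lieDeriv_char, inner_smul_right]
  contrapose! h
  have cancel (k : R4) := mul_left_cancel₀ two_pi_I_ne_zero (mul_right_cancel₀ h (eigenvalues_eq k))
  exact Zsqrtd.ext (by simpa using (cancel (0, 1, 0, 0)).symm)
    (by simpa using (cancel (0, 0, 1, 0)).symm)

theorem orthonormal_char : Orthonormal ℂ char := by
  classical
  rw [orthonormal_iff_ite]
  intro p q
  split_ifs with h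
  · rw [h, inner_char_self]
  · exact inner_char_of_ne h

theorem inner_char_eq_intervalIntegral {u : KT} (hT : lieDeriv (1, 0, 0, 0) u = 0)
    (hZ : lieDeriv (0, 0, 0, 1) u = 0) (p : GaussianInt) :
    inner ℂ (char p) u = ∫ x in (0 : ℝ)..1, ∫ y in (0 : ℝ)..1,
      expMode (-p.re) x * (expMode (-p.im) y * u (0, x, y, 0)) := by
  have integrand (t x y z : ℝ) : conjMul (char p) u (t, x, y, z) =
      expMode (-p.re) x * (expMode (-p.im) y * u (0, x, y, 0)) := by
    rw [conjMul_apply, char_apply, map_mul, conj_expMode, conj_expMode, mul_assoc,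
      apply_eq_of_lieDeriv_eq_zero hT hZ]
  have integral_yz (t x : ℝ) : ∫ w in Set.Icc (0 : ℝ) 1 ×ˢ Set.Icc (0 : ℝ) 1,
      conjMul (char p) u (t, x, w) = ∫ y in Set.Icc (0 : ℝ) 1,
        expMode (-p.re) x * (expMode (-p.im) y * u (0, x, y, 0)) := by
    rw [Measure.volume_eq_prod,
      setIntegral_prod_of_isCompact (by fun_prop) isCompact_Icc isCompact_Icc]
    simp [integrand]
  rw [inner_eq_setIntegral, setIntegral_cube (by fun_prop)]
  simp only [integral_yz, setIntegral_const, measureReal_def, Real.volume_Icc, sub_zero,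
    ENNReal.ofReal_one, ENNReal.toReal_one, one_smul,
    intervalIntegral.integral_of_le zero_le_one, integral_Icc_eq_integral_Ioc]

theorem eq_zero_of_inner_char_eq_zero {u : KT} (hT : lieDeriv (1, 0, 0, 0) u = 0)
    (hZ : lieDeriv (0, 0, 0, 1) u = 0) (h : ∀ p, inner ℂ (char p) u = (0 : ℂ)) : u = 0 := by
  have periodic_x (y : ℝ) : (fun x => u (0, x, y, 0)).Periodic 1 := fun x => by
    dsimp only
    rw [← u.apply_x_add_one 0 x y 0, apply_eq_of_lieDeriv_eq_zero hT hZ 0 (x + 1) y (0 + y)]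
  have restrict := eq_zero_of_intervalIntegral_expMode_mul_expMode_mul
    (φ := fun w => u (0, w.1, w.2, 0)) (by fun_prop) periodic_x (fun x => u.periodic_y 0 x 0)
    fun k m => (inner_char_eq_intervalIntegral hT hZ ⟨k, m⟩).symm.trans (h _)
  ext ⟨t, x, y, z⟩
  rw [apply_eq_of_lieDeriv_eq_zero hT hZ]
  exact congrFun restrict (x, y)

theorem eq_sum_inner_smul_char {u : KT} (hT : lieDeriv (1, 0, 0, 0) u = 0)
    (hZ : lieDeriv (0, 0, 0, 1) u = 0) {S : Finset GaussianInt}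
    (h : ∀ p ∉ S, inner ℂ (char p) u = (0 : ℂ)) :
    u = ∑ p ∈ S, inner ℂ (char p) u • char p := by
  have lieDeriv_sum {k : R4} (hx : k.2.1 = 0) (hy : k.2.2.1 = 0) :
      lieDeriv k (∑ p ∈ S, inner ℂ (char p) u • char p) = 0 := by
    simp [lieDeriv_char, hx, hy]
  rw [← sub_eq_zero]
  refine eq_zero_of_inner_char_eq_zero ?_ ?_ fun p => ?_
  · rw [map_sub, hT, lieDeriv_sum rfl rfl, sub_zero]
  · rw [map_sub, hZ, lieDeriv_sum rfl rfl, sub_zero]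
  · rw [inner_sub_right, sub_eq_zero]
    by_cases hp : p ∈ S
    · rw [orthonormal_char.inner_right_sum _ hp]
    · rw [h p hp, inner_sum, Finset.sum_eq_zero fun q hq => ?_]
      rw [inner_smul_right, orthonormal_char.2 (ne_of_mem_of_not_mem hq hp).symm, mul_zero]

/-! ### The solution space -/

/-- The frequencies `p = k + mi` of the solutions of the system that depend on `(x, y)` only. They
are the Gaussian integers on a circle through `0` centred on the real axis. -/
def frequencies (b : ℝ) : Set GaussianInt := {p | 4 * Real.pi * p.norm = b * p.re}

theorem mem_frequencies {b : ℝ} {p : GaussianInt} :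
    p ∈ frequencies b ↔ 4 * Real.pi * ((p.re : ℂ) ^ 2 + (p.im : ℂ) ^ 2) = b * p.re := by
  rw [frequencies, Set.mem_ofPred_eq, Zsqrtd.norm_def, ← ofReal_inj]
  push_cast
  ring_nf

/-- The system satisfied by the Fourier coefficients `w` of frequency `p` of a solution that depends
on `(x, y)` only. -/
def IsAmplitude (b : ℝ) (p : GaussianInt) (w : ℂ × ℂ) : Prop :=
  p.re * w.1 = -(I * p.im) * w.2 ∧ (b - 4 * Real.pi * p.re) * w.2 = 4 * Real.pi * I * p.im * w.1

/-- A nonzero element of the kernel of the system `IsAmplitude`, for a frequency where the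
determinant vanishes. The first equation determines it unless `k = 0`, which forces `m = 0`. -/
noncomputable def amplitude (p : GaussianInt) : ℂ × ℂ :=
  if p.re = 0 then (1, 0) else (-(I * p.im), p.re)

theorem amplitude_ne_zero (p : GaussianInt) : amplitude p ≠ 0 := by
  unfold amplitude
  split_ifs with hre <;> simp [hre]

theorem isAmplitude_amplitude {b : ℝ} {p : GaussianInt} (hp : p ∈ frequencies b) :
    IsAmplitude b p (amplitude p) := by
  rw [mem_frequencies] at hp
  unfold IsAmplitude amplitude
  split_ifs with hre
  · have him : p.im = 0 := by simpa [hre, Real.pi_ne_zero] using hp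
    simp [hre, him]
  · constructor
    · ring
    · linear_combination -hp + 4 * Real.pi * (p.im : ℂ) ^ 2 * I_sq

/-- Off the circle the determinant of the system is nonzero. -/
theorem IsAmplitude.eq_zero {b : ℝ} {p : GaussianInt} {w : ℂ × ℂ} (h : IsAmplitude b p w)
    (hp : p ∉ frequencies b) : w = 0 := by
  obtain ⟨h₁, h₂⟩ := h
  have det_ne_zero : (b * p.re - 4 * Real.pi * ((p.re : ℂ) ^ 2 + (p.im : ℂ) ^ 2) : ℂ) ≠ 0 :=
    fun h => hp (mem_frequencies.2 (sub_eq_zero.1 h).symm)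
  refine Prod.ext (mul_left_cancel₀ det_ne_zero ?_) (mul_left_cancel₀ det_ne_zero ?_)
  · rw [Prod.fst_zero]
    linear_combination (b - 4 * Real.pi * p.re : ℂ) * h₁ - I * p.im * h₂ -
      4 * Real.pi * (p.im : ℂ) ^ 2 * w.1 * I_sq
  · rw [Prod.snd_zero]
    linear_combination (p.re : ℂ) * h₂ + 4 * Real.pi * I * p.im * h₁ -
      4 * Real.pi * (p.im : ℂ) ^ 2 * w.2 * I_sq

theorem IsAmplitude.exists_eq_smul {b : ℝ} (hb : b ≠ 0) {p : GaussianInt} {w : ℂ × ℂ}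
    (h : IsAmplitude b p w) : ∃ c : ℂ, w = c • amplitude p := by
  obtain ⟨h₁, h₂⟩ := h
  unfold amplitude
  split_ifs with hre
  · have snd_eq_zero : w.2 = 0 := by
      by_cases him : p.im = 0
      · simpa [hre, him, hb] using h₂
      · simpa [hre, him] using h₁
    exact ⟨w.1, Prod.ext (by simp) (by simp [snd_eq_zero])⟩
  · have hre' : (p.re : ℂ) ≠ 0 := by exact_mod_cast hre
    refine ⟨w.2 / p.re, Prod.ext (mul_left_cancel₀ hre' ?_) (by simp [hre])⟩
    rw [h₁]
    simp only [Prod.smul_fst, smul_eq_mul]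
    field_simp

/-- The solution of frequency `p`. -/
noncomputable def planeWave (p : GaussianInt) : KT × KT :=
  ((amplitude p).1 • char p, (amplitude p).2 • char p)

theorem planeWave_mem_solutions {a b : ℝ} {p : GaussianInt} (hp : p ∈ frequencies b) :
    planeWave p ∈ rep.solutions a b := by
  obtain ⟨h₁, h₂⟩ := isAmplitude_amplitude hp
  change rep.IsSolution a b ((amplitude p).1 • char p) ((amplitude p).2 • char p)
  constructor <;> simp only [rep, map_smul, lieDeriv_char, smul_smul, ← add_smul, ← sub_smul,
    ← neg_smul] <;> congr 1 <;> push_cast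
  · linear_combination h₂ / 2 + 2 * Real.pi * (p.re : ℂ) * (amplitude p).2 * I_sq
  · linear_combination 2 * Real.pi * h₁ - 2 * Real.pi * (p.re : ℂ) * (amplitude p).1 * I_sq

theorem linearIndependent_planeWave : LinearIndependent ℂ planeWave := by
  have linearIndependent_char := linearIndependent_iff'.1 orthonormal_char.linearIndependent
  refine linearIndependent_iff'.2 fun S c hc p hp => ?_
  have fst_eq_zero : c p * (amplitude p).1 = 0 :=
    linearIndependent_char S (fun q => c q * (amplitude q).1)
      (by simpa [planeWave, Prod.fst_sum, smul_smul] using congrArg Prod.fst hc) p hp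
  have snd_eq_zero : c p * (amplitude p).2 = 0 :=
    linearIndependent_char S (fun q => c q * (amplitude q).2)
      (by simpa [planeWave, Prod.snd_sum, smul_smul] using congrArg Prod.snd hc) p hp
  exact (smul_eq_zero.1 (Prod.ext fst_eq_zero snd_eq_zero : c p • amplitude p = 0)).resolve_right
    (amplitude_ne_zero p)

theorem isAmplitude_of_isSolution {a b : ℝ} {f g : KT} (h : rep.IsSolution a b f g)
    (hf : rep.Z f = 0) (hg : rep.Z g = 0) (p : GaussianInt) :
    IsAmplitude b p (inner ℂ (char p) f, inner ℂ (char p) g) := by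
  obtain ⟨hTf, hTg⟩ := h.T_eq_zero
  have eq_g := congrArg (inner ℂ (char p)) h.1
  have eq_f := congrArg (inner ℂ (char p)) h.2
  rw [hTg, hf] at eq_g
  rw [hTf, hg] at eq_f
  simp only [rep, smul_zero, zero_add, zero_sub, sub_zero, add_zero, inner_add_right,
    inner_neg_right, inner_smul_right, inner_char_lieDeriv] at eq_f eq_g
  push_cast at eq_f eq_g
  constructor
  · refine mul_left_cancel₀ two_pi_I_ne_zero ?_
    linear_combination I * eq_f + 2 * Real.pi * I * (p.re : ℂ) * inner ℂ (char p) f * I_sq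
  · linear_combination 2 * eq_g - 4 * Real.pi * (p.re : ℂ) * inner ℂ (char p) g * I_sq

theorem span_planeWave {a b : ℝ} (hb : NonResonant b) (hS : (frequencies b).Finite) :
    Submodule.span ℂ (Set.range fun p : frequencies b => planeWave p) = rep.solutions a b := by
  refine le_antisymm (Submodule.span_le.2 ?_) fun ⟨f, g⟩ h => ?_
  · rintro _ ⟨p, rfl⟩
    exact planeWave_mem_solutions p.2
  obtain ⟨hTf, hTg⟩ := HeisenbergRep.IsSolution.T_eq_zero h
  obtain ⟨hZf, hZg⟩ := z_eq_zero_of_isSolution hb h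
  have isAmplitude := isAmplitude_of_isSolution h hZf hZg
  have coeff_eq_zero {p : GaussianInt} (hp : p ∉ hS.toFinset) :=
    (isAmplitude p).eq_zero (by simpa using hp)
  choose c hc using fun p => (isAmplitude p).exists_eq_smul hb.ne_zero
  have expansion : (f, g) = ∑ p ∈ hS.toFinset, c p • planeWave p := by
    have coeff_f (p : GaussianInt) : inner ℂ (char p) f = c p * (amplitude p).1 :=
      congrArg Prod.fst (hc p)
    have coeff_g (p : GaussianInt) : inner ℂ (char p) g = c p * (amplitude p).2 :=
      congrArg Prod.snd (hc p)
    have series_f := eq_sum_inner_smul_char hTf hZf fun p hp => congrArg Prod.fst (coeff_eq_zero hp)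
    have series_g := eq_sum_inner_smul_char hTg hZg fun p hp => congrArg Prod.snd (coeff_eq_zero hp)
    simp only [coeff_f, coeff_g, mul_smul] at series_f series_g
    rw [series_f, series_g]
    simp only [Prod.ext_iff, Prod.fst_sum, Prod.snd_sum, planeWave, Prod.smul_mk, and_self]
  rw [expansion]
  exact Submodule.sum_mem _ fun p hp =>
    Submodule.smul_mem _ _ (Submodule.subset_span ⟨⟨p, hS.mem_toFinset.1 hp⟩, rfl⟩)

/-- A function on the manifold, as a function of four real variables. -/
def toF4 : KT →ₗ[ℂ] F4 := ktSubmodule.subtype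

theorem toF4_apply (u : KT) (t x y z : ℝ) : toF4 u t x y z = u (t, x, y, z) := rfl

theorem toF4_injective : Function.Injective toF4 := ktSubmodule.subtype_injective

theorem pT_toF4 (u : KT) (t x y z : ℝ) : pT (toF4 u) t x y z = rep.T u (t, x, y, z) :=
  (u.hasDerivAt_t t x y z).deriv.trans (by simp [rep, lieDeriv_apply_eq_sum])

theorem pX_toF4 (u : KT) (t x y z : ℝ) : pX (toF4 u) t x y z = rep.X u (t, x, y, z) :=
  (u.hasDerivAt_x t x y z).deriv.trans (by simp [rep, lieDeriv_apply_eq_sum])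

theorem pY_toF4 (u : KT) (t x y z : ℝ) :
    pY (toF4 u) t x y z = rep.Y u (t, x, y, z) - x * rep.Z u (t, x, y, z) :=
  (u.hasDerivAt_y t x y z).deriv.trans (by simp [rep, lieDeriv_apply_eq_sum])

theorem pZ_toF4 (u : KT) (t x y z : ℝ) : pZ (toF4 u) t x y z = rep.Z u (t, x, y, z) :=
  (u.hasDerivAt_z t x y z).deriv.trans (by simp [rep, lieDeriv_apply_eq_sum])

theorem isSolution_iff {a b : ℝ} {f g : KT} :
    rep.IsSolution a b f g ↔
      (∀ t x y z : ℝ, -V₂c a b (toF4 f) t x y z + V₁c (toF4 g) t x y z +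
        ((b : ℂ) / 4) * toF4 g t x y z = 0) ∧
      ∀ t x y z : ℝ, V₁ (toF4 f) t x y z + V₂ a b (toF4 g) t x y z = 0 := by
  simp only [HeisenbergRep.IsSolution, V₂c, V₁c, V₁, V₂, pT_toF4, pX_toF4, pY_toF4, pZ_toF4,
    toF4_apply, DFunLike.ext_iff, Prod.forall, add_apply, sub_apply, neg_apply, smul_apply]
  refine and_congr (forall₄_congr fun t x y z => ⟨fun h => ?_, fun h => ?_⟩)
    (forall₄_congr fun t x y z => ⟨fun h => ?_, fun h => ?_⟩)
  · linear_combination h / 2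
  · linear_combination 2 * h
  · linear_combination h / 2
  · linear_combination 2 * h

theorem sol_eq_map_solutions (a b : ℝ) :
    Sol a b = (rep.solutions a b).map (toF4.prodMap toF4) := by
  ext ⟨f, g⟩
  constructor
  · rintro ⟨hf, hg, hf', hg', h⟩
    exact ⟨((⟨f, hf, hf'⟩ : ktSubmodule), (⟨g, hg, hg'⟩ : ktSubmodule)), isSolution_iff.2 h, rfl⟩
  · rintro ⟨⟨u, v⟩, h, ⟨⟩⟩
    exact ⟨u.2.1, v.2.1, u.2.2, v.2.2, isSolution_iff.1 h⟩

theorem hasDimOver_sol (a : ℝ) {b : ℝ} (hb : NonResonant b) (hS : (frequencies b).Finite) :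
    HasDimOver (Sol a b) (frequencies b).ncard := by
  have := hS.to_subtype
  have independent : LinearIndependent ℂ
      (toF4.prodMap toF4 ∘ fun p : frequencies b => planeWave p) :=
    (linearIndependent_planeWave.comp _ Subtype.val_injective).map' _
      (LinearMap.ker_eq_bot.2 (toF4_injective.prodMap toF4_injective))
  rw [sol_eq_map_solutions, ← span_planeWave hb hS, Submodule.map_span, ← Set.range_comp]
  exact hasDimOver_span independent

theorem frequencies_eq_circle {d : ℕ} (hd : d ≠ 0) (C : ℤ) :
    frequencies (8 * Real.pi * C / d) = LatticeCircle.circle d C := by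
  ext p
  have hd' : (d : ℝ) ≠ 0 := by exact_mod_cast hd
  rw [frequencies, LatticeCircle.circle, Set.mem_ofPred_eq, Set.mem_ofPred_eq,
    ← Int.cast_inj (α := ℝ), ← mul_right_inj' (mul_ne_zero four_ne_zero Real.pi_ne_zero)]
  push_cast
  constructor <;> intro h
  · field_simp at h ⊢
    linear_combination h / 4
  · field_simp at h ⊢
    linear_combination 4 * h

theorem hasDimOver_sol_of_prime (a : ℝ) {P : ℕ} (hP : P.Prime) (hP4 : P % 4 = 1) {d e n : ℕ}
    (hd : d ∣ 4) (hn : 0 < n) (hdn : d * n = 4 * (2 * e + 1))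
    (hb : NonResonant (8 * Real.pi * (P ^ e : ℕ) / d)) :
    HasDimOver (Sol a (8 * Real.pi * (P ^ e : ℕ) / d)) n := by
  have hd0 : d ≠ 0 := ne_zero_of_dvd_ne_zero four_ne_zero hd
  have card_frequencies : (frequencies (8 * Real.pi * (P ^ e : ℕ) / d)).ncard = n := by
    have := frequencies_eq_circle hd0 ((P : ℤ) ^ e)
    push_cast at this ⊢
    rw [this]
    exact mul_left_cancel₀ hd0 ((LatticeCircle.mul_ncard_circle hP hP4 hd e).trans hdn.symm)
  rw [← card_frequencies]
  exact hasDimOver_sol a hb (Set.finite_of_ncard_pos (card_frequencies ▸ hn))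

end KT

/-- Holt–Zhang: for every `a ∈ ℝ` and every positive integer `n` not
divisible by `8`, there is a `b ∈ ℝ \ {0}` such that `𝒮(a,b)` has dimension exactly `n`. -/
theorem exists_b_hodge_number_h01_eq
    (a : ℝ) (n : ℕ) (hn : 0 < n) (h8 : ¬ (8 ∣ n)) :
    ∃ b : ℝ, b ≠ 0 ∧ HasDimOver (Sol a b) n := by
  obtain ⟨s, _, ⟨e, rfl⟩, rfl⟩ := Nat.exists_eq_two_pow_mul_odd hn.ne'
  have hs : s ≤ 2 := by
    contrapose! h8
    exact (pow_dvd_pow 2 h8).mul_right _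
  have hd : 2 ^ (2 - s) ∣ 4 := pow_dvd_pow 2 (Nat.sub_le 2 s)
  have hdn : 2 ^ (2 - s) * (2 ^ s * (2 * e + 1)) = 4 * (2 * e + 1) := by
    rw [← mul_assoc, ← pow_add, Nat.sub_add_cancel hs]
    rfl
  rcases nonResonant_or_nonResonant (A := 5 ^ e) (B := 13 ^ e) (d := 2 ^ (2 - s)) (by positivity)
    (by positivity) (by positivity) (Nat.Coprime.pow e e (by norm_num)) with hb | hb
  · exact ⟨_, hb.ne_zero, KT.hasDimOver_sol_of_prime a (by norm_num) (by norm_num) hd hn hdn hb⟩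
  · exact ⟨_, hb.ne_zero, KT.hasDimOver_sol_of_prime a (by norm_num) (by norm_num) hd hn hdn hb⟩
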